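/- arXiv:2106.06121 — 3 statements merged into one kernel-verified Lean document; each statement's English description precedes it below -/
import Mathlib

section
/- There exists a universal constant C > 1 so that the following holds. Let n ≥ C be an integer, p ∈ [1,2], K > 0, and let 0 ≤ t ≤ (K/C)·√n. Then there exists a random vector X = (X_1,…,X_n) with i.i.d. components whose ψ_p-norm is bounded above by K, and a median m of ‖X‖₂, such that ℙ{‖X‖₂ − m ≥ t} ≥ (1/C)·exp( −C·t² / ( K²·( log(2 + K²·n/t²) )^{2/p} ) ) and ℙ{‖X‖₂ − m ≤ −t} ≥ (1/C)·exp( −C·t² / ( K²·( log(2 + K²·n/t²) )^{2/p} ) ). -/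
open MeasureTheory ENNReal

/-- The ψ_p-norm of a real random variable `Y` under measure `μ`:
`inf {λ > 0 : 𝔼 exp(|Y|^p/λ^p) ≤ 2}`. -/
noncomputable def psipNorm (p : ℝ) {Ω : Type*} [MeasurableSpace Ω] (μ : Measure Ω)
    (Y : Ω → ℝ) : ℝ :=
  sInf {l : ℝ | 0 < l ∧ ∫⁻ ω, ENNReal.ofReal (Real.exp (|Y ω| ^ p / l ^ p)) ∂μ ≤ 2}

/-- `m` is a median of the real random variable `Z` under `μ`. -/
def IsMedian {Ω : Type*} [MeasurableSpace Ω] (μ : Measure Ω) (Z : Ω → ℝ) (m : ℝ) : Prop :=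
  2⁻¹ ≤ μ {ω | m ≤ Z ω} ∧ 2⁻¹ ≤ μ {ω | Z ω ≤ m}

/-- The Euclidean norm on `Fin n → ℝ`. -/
noncomputable def euclNorm {n : ℕ} (x : Fin n → ℝ) : ℝ := Real.sqrt (∑ i, (x i) ^ 2)

/-!
Take independent `Xᵢ ∈ {0, a}` with `ℙ(Xᵢ = a) = 4k/n`, so that `‖X‖₂ = a√N` with `N` binomial of
mean `4k`. The exponential moment of `N` puts every median of `‖X‖₂` between `a√k` and `3a√k`,
while `N = 0` and `N = 16k` both have probability at least `exp (-40k)`; hence `‖X‖₂` deviates from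
its median by `a√k` in either direction with that probability. The `ψ_p` constraint allows
`(a/K)^p = log (1 + n/(4k))`, and `a√k ≥ t` then holds for
`k ≈ t² / (K² log(2 + K²n/t²)^{2/p})`, which is the claimed exponent.
-/

open ProbabilityTheory unitInterval

section Median

variable {Ω Ω' : Type*} [MeasurableSpace Ω] [MeasurableSpace Ω'] {μ : Measure Ω} {ν : Measure Ω'}

lemma exists_isMedian_id (μ : Measure ℝ) [IsProbabilityMeasure μ] : ∃ m, IsMedian μ id m := by
  let S := {x | 2⁻¹ ≤ cdf μ x}
  have hS : S.Nonempty :=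
    ((tendsto_cdf_atTop μ).eventually_const_le (by norm_num : (2⁻¹ : ℝ) < 1)).exists
  have hS' : BddBelow S := by
    obtain ⟨b, hb⟩ :=
      ((tendsto_cdf_atBot μ).eventually_lt_const (by norm_num : (0 : ℝ) < 2⁻¹)).exists
    exact ⟨b, fun x hx => le_of_lt <| (monotone_cdf μ).reflect_lt (hb.trans_le hx)⟩
  have two_inv : (2⁻¹ : ℝ≥0∞) = ENNReal.ofReal 2⁻¹ := by
    rw [ENNReal.ofReal_inv_of_pos two_pos, ENNReal.ofReal_ofNat]
  refine ⟨sInf S, ?_, ?_⟩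
  · have left_lim_le : Function.leftLim (cdf μ) (sInf S) ≤ 2⁻¹ := by
      rw [(monotone_cdf μ).leftLim_eq_sSup]
      refine csSup_le (Set.nonempty_Iio.image _) ?_
      rintro _ ⟨x, hx, rfl⟩
      exact (not_le.1 fun h => notMem_of_lt_csInf hx hS' h).le
    calc (2⁻¹ : ℝ≥0∞) ≤ (cdf μ).measure (Set.Ici (sInf S)) := by
          rw [(cdf μ).measure_Ici (tendsto_cdf_atTop μ), two_inv]
          exact ENNReal.ofReal_le_ofReal (by linarith)
      _ = μ {x | sInf S ≤ id x} := by rw [measure_cdf]; rfl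
  · have half_le_cdf : 2⁻¹ ≤ cdf μ (sInf S) := by
      rw [← (cdf μ).iInf_Ioi_eq]
      refine le_ciInf fun ⟨x, hx⟩ => ?_
      obtain ⟨y, hy, hyx⟩ := exists_lt_of_csInf_lt hS hx
      exact hy.trans (monotone_cdf μ hyx.le)
    calc (2⁻¹ : ℝ≥0∞) ≤ ENNReal.ofReal (cdf μ (sInf S)) :=
          two_inv ▸ ENNReal.ofReal_le_ofReal half_le_cdf
      _ = μ {x | id x ≤ sInf S} := ofReal_cdf μ _

lemma isMedian_congr_identDistrib {Y : Ω → ℝ} {Z : Ω' → ℝ} (h : IdentDistrib Y Z μ ν) {m : ℝ} :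
    IsMedian μ Y m ↔ IsMedian ν Z m := by
  have ge_eq : μ {ω | m ≤ Y ω} = ν {ω | m ≤ Z ω} := h.measure_mem_eq measurableSet_Ici
  have le_eq : μ {ω | Y ω ≤ m} = ν {ω | Z ω ≤ m} := h.measure_mem_eq measurableSet_Iic
  rw [IsMedian, IsMedian, ge_eq, le_eq]

lemma exists_isMedian [IsProbabilityMeasure μ] {Z : Ω → ℝ} (hZ : AEMeasurable Z μ) :
    ∃ m, IsMedian μ Z m := by
  have : IsProbabilityMeasure (μ.map Z) := Measure.isProbabilityMeasure_map hZ
  obtain ⟨m, hm⟩ := exists_isMedian_id (μ.map Z)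
  have hZ_id : IdentDistrib Z id μ (μ.map Z) := ⟨hZ, aemeasurable_id, Measure.map_id.symm⟩
  exact ⟨m, (isMedian_congr_identDistrib hZ_id).2 hm⟩

variable [IsFiniteMeasure μ] {Z : Ω → ℝ} {m c : ℝ}

lemma IsMedian.lt_of_measureReal_lt (hm : IsMedian μ Z m) (hc : μ.real {ω | c ≤ Z ω} < 2⁻¹) :
    m < c := by
  by_contra! hcm
  have half_le : (2⁻¹ : ℝ) ≤ μ.real {ω | m ≤ Z ω} := by
    simpa [measureReal_def] using ENNReal.toReal_mono (measure_ne_top _ _) hm.1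
  exact hc.not_ge (half_le.trans (measureReal_mono fun ω hω => hcm.trans hω))

lemma IsMedian.gt_of_measureReal_lt (hm : IsMedian μ Z m) (hc : μ.real {ω | Z ω ≤ c} < 2⁻¹) :
    c < m := by
  by_contra! hmc
  have half_le : (2⁻¹ : ℝ) ≤ μ.real {ω | Z ω ≤ m} := by
    simpa [measureReal_def] using ENNReal.toReal_mono (measure_ne_top _ _) hm.2
  exact hc.not_ge (half_le.trans (measureReal_mono fun ω hω => le_trans hω hmc))

end Median

section Binomial

variable (n : ℕ) (q : I)

lemma mgf_natCast_binomial (t : ℝ) :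
    mgf (Nat.cast : ℕ → ℝ) Bin(n, q) t = (1 - q + q * Real.exp t) ^ n := by
  rw [mgf, integral_binomial, add_comm, add_pow, ← Nat.range_succ_eq_Iic]
  refine Finset.sum_congr rfl fun j _ => ?_
  rw [smul_eq_mul, mul_pow, ← Real.exp_nat_mul, mul_comm t]
  ring

lemma mgf_natCast_binomial_le_exp (t : ℝ) :
    mgf (Nat.cast : ℕ → ℝ) Bin(n, q) t ≤ Real.exp (n * q * (Real.exp t - 1)) := by
  have base_nonneg : 0 ≤ 1 - (q : ℝ) + q * Real.exp t :=
    add_nonneg (one_minus_nonneg q) (mul_nonneg q.2.1 (Real.exp_pos t).le)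
  calc mgf (Nat.cast : ℕ → ℝ) Bin(n, q) t = (1 - q + q * Real.exp t) ^ n :=
        mgf_natCast_binomial n q t
    _ ≤ Real.exp (q * (Real.exp t - 1)) ^ n := by
        gcongr
        linarith [Real.add_one_le_exp (q * (Real.exp t - 1))]
    _ = Real.exp (n * q * (Real.exp t - 1)) := by rw [← Real.exp_nat_mul, mul_assoc]

lemma binomial_real_ge_le_exp {t : ℝ} (ht : 0 ≤ t) (x : ℝ) :
    Bin(n, q).real {N | x ≤ N} ≤ Real.exp (-t * x + n * q * (Real.exp t - 1)) := by
  rw [Real.exp_add]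
  refine (measure_ge_le_exp_mul_mgf x ht (integrable_binomial _)).trans ?_
  gcongr
  exact mgf_natCast_binomial_le_exp n q t

lemma binomial_real_le_le_exp {t : ℝ} (ht : t ≤ 0) (x : ℝ) :
    Bin(n, q).real {N | (N : ℝ) ≤ x} ≤ Real.exp (-t * x + n * q * (Real.exp t - 1)) := by
  rw [Real.exp_add]
  refine (measure_le_le_exp_mul_mgf x ht (integrable_binomial _)).trans ?_
  gcongr
  exact mgf_natCast_binomial_le_exp n q t

lemma div_pow_le_choose {n j : ℕ} (hj : j ≤ n) : ((n : ℝ) / j) ^ j ≤ n.choose j := by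
  induction j generalizing n with
  | zero => simp
  | succ j ih =>
    obtain ⟨n, rfl⟩ : ∃ n', n = n' + 1 := ⟨n - 1, by omega⟩
    have hjn : j ≤ n := by omega
    have choose_succ : ((n + 1).choose (j + 1) : ℝ) = (n + 1) / (j + 1) * n.choose j := by
      have := Nat.add_one_mul_choose_eq n j
      field_simp
      exact_mod_cast this.symm
    have ratio_pow_le : (((n : ℝ) + 1) / (j + 1)) ^ j ≤ (n / j) ^ j := by
      rcases j.eq_zero_or_pos with rfl | hj0
      · simp
      · have : (j : ℝ) ≤ n := by exact_mod_cast hjn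
        have : (0 : ℝ) < j := by exact_mod_cast hj0
        gcongr ?_ ^ j
        rw [div_le_div_iff₀ (by positivity) (by positivity)]
        linarith
    calc (((n + 1 : ℕ) : ℝ) / ((j + 1 : ℕ) : ℝ)) ^ (j + 1)
        = (n + 1) / (j + 1) * ((n + 1) / (j + 1)) ^ j := by push_cast; rw [pow_succ']
      _ ≤ (n + 1) / (j + 1) * n.choose j := by gcongr; exact ratio_pow_le.trans (ih hjn)
      _ = (n + 1).choose (j + 1) := choose_succ.symm

lemma exp_neg_two_mul_le_one_sub {x : ℝ} (hx₀ : 0 ≤ x) (hx : x ≤ 1 / 2) :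
    Real.exp (-(2 * x)) ≤ 1 - x := by
  rw [Real.exp_neg, inv_le_comm₀ (Real.exp_pos _) (by linarith),
    inv_le_iff_one_le_mul₀ (by linarith)]
  nlinarith [Real.add_one_le_exp (2 * x)]

variable {n q}

lemma div_pow_mul_exp_le_binomial_real_singleton {j : ℕ} (hj : j ≤ n) (hq : (q : ℝ) ≤ 1 / 2) :
    (n * q / j : ℝ) ^ j * Real.exp (-(2 * (n * q))) ≤ Bin(n, q).real {j} := by
  have exp_le : Real.exp (-(2 * (n * q))) ≤ (1 - q : ℝ) ^ (n - j) :=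
    calc Real.exp (-(2 * (n * q))) = Real.exp (-(2 * q)) ^ n := by
          rw [← Real.exp_nat_mul]; ring_nf
      _ ≤ (1 - q : ℝ) ^ n := by gcongr; exact exp_neg_two_mul_le_one_sub q.2.1 hq
      _ ≤ (1 - q : ℝ) ^ (n - j) :=
          pow_le_pow_of_le_one (one_minus_nonneg q) (one_minus_le_one q) (Nat.sub_le n j)
  calc (n * q / j : ℝ) ^ j * Real.exp (-(2 * (n * q)))
      = (n / j) ^ j * q ^ j * Real.exp (-(2 * (n * q))) := by rw [← mul_pow, div_mul_eq_mul_div]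
    _ ≤ n.choose j * q ^ j * (1 - q) ^ (n - j) := by
        have := q.2.1
        gcongr
        exact div_pow_le_choose hj
    _ = Bin(n, q).real {j} := (binomial_real_singleton n j q).symm

variable {k : ℕ}

lemma binomial_real_ge_nine_mul_lt (hk : 1 ≤ k) (hq : n * (q : ℝ) = 4 * k) :
    Bin(n, q).real {N | 9 * k ≤ N} < 2⁻¹ := by
  have one_le_k : (1 : ℝ) ≤ k := by exact_mod_cast hk
  calc Bin(n, q).real {N | 9 * k ≤ N} = Bin(n, q).real {N | (9 * k : ℝ) ≤ N} := by
        congr 1; ext N; simp only [Set.mem_ofPred_eq]; norm_cast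
    _ ≤ Real.exp (-1 * (9 * k) + n * q * (Real.exp 1 - 1)) :=
        binomial_real_ge_le_exp n q zero_le_one _
    _ ≤ Real.exp (-1) := by
        rw [hq, Real.exp_le_exp]
        nlinarith [Real.exp_one_lt_three]
    _ < 2⁻¹ := by rw [Real.exp_neg]; exact inv_strictAnti₀ two_pos Real.exp_one_gt_two

lemma binomial_real_le_lt (hk : 1 ≤ k) (hq : n * (q : ℝ) = 4 * k) :
    Bin(n, q).real {N | N ≤ k} < 2⁻¹ := by
  have one_le_k : (1 : ℝ) ≤ k := by exact_mod_cast hk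
  have exp_lt : Real.exp (-1) < 2⁻¹ := by
    rw [Real.exp_neg]; exact inv_strictAnti₀ two_pos Real.exp_one_gt_two
  calc Bin(n, q).real {N | N ≤ k} = Bin(n, q).real {N | (N : ℝ) ≤ k} := by simp only [Nat.cast_le]
    _ ≤ Real.exp (- -1 * k + n * q * (Real.exp (-1) - 1)) :=
        binomial_real_le_le_exp n q (by norm_num) _
    _ ≤ Real.exp (-1) := by
        rw [hq, Real.exp_le_exp]
        nlinarith
    _ < 2⁻¹ := exp_lt

lemma exp_neg_forty_mul_le_binomial_real_zero (hq₂ : (q : ℝ) ≤ 1 / 2) (hq : n * (q : ℝ) = 4 * k) :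
    Real.exp (-(40 * k)) ≤ Bin(n, q).real {0} := by
  have h := div_pow_mul_exp_le_binomial_real_singleton n.zero_le hq₂
  rw [hq, pow_zero, one_mul] at h
  exact (Real.exp_le_exp.2 (by linarith [k.cast_nonneg (α := ℝ)])).trans h

lemma exp_neg_forty_mul_le_binomial_real_sixteen_mul (hk : 1 ≤ k) (hkn : 16 * k ≤ n)
    (hq₂ : (q : ℝ) ≤ 1 / 2) (hq : n * (q : ℝ) = 4 * k) :
    Real.exp (-(40 * k)) ≤ Bin(n, q).real {16 * k} := by
  have ratio_eq : (n * q / (16 * k : ℕ) : ℝ) = 1 / 4 := by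
    have : (k : ℝ) ≠ 0 := by exact_mod_cast (Nat.pos_of_ne_zero (by omega)).ne'
    rw [hq]; push_cast; field_simp; norm_num
  have exp_le : Real.exp (-2) ≤ 1 / 4 := by
    rw [Real.exp_neg, one_div]
    refine inv_anti₀ four_pos ?_
    calc (4 : ℝ) = 2 ^ 2 := by norm_num
      _ ≤ Real.exp 1 ^ 2 := by gcongr; exact Real.exp_one_gt_two.le
      _ = Real.exp 2 := by rw [← Real.exp_nat_mul]; norm_num
  calc Real.exp (-(40 * k)) = Real.exp (-2) ^ (16 * k) * Real.exp (-(2 * (4 * k))) := by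
        rw [← Real.exp_nat_mul, ← Real.exp_add]; push_cast; ring_nf
    _ ≤ (1 / 4) ^ (16 * k) * Real.exp (-(2 * (4 * k))) := by gcongr
    _ ≤ Bin(n, q).real {16 * k} := by
        rw [← ratio_eq, ← hq]; exact div_pow_mul_exp_le_binomial_real_singleton hkn hq₂

lemma IsMedian.mem_Ioo_of_mul_sqrt_binomial {c m : ℝ} (hc : 0 < c) (hk : 1 ≤ k)
    (hq : n * (q : ℝ) = 4 * k) (hm : IsMedian Bin(n, q) (fun N => c * √N) m) :
    m ∈ Set.Ioo (c * √k) (3 * (c * √k)) := by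
  have three_mul : 3 * (c * √k) = c * √(9 * k : ℕ) := by
    rw [Nat.cast_mul, Real.sqrt_mul (by positivity), show ((9 : ℕ) : ℝ) = 3 ^ 2 by norm_num,
      Real.sqrt_sq (by norm_num)]
    ring
  constructor
  · refine hm.gt_of_measureReal_lt ?_
    simpa [hc, Real.sqrt_le_sqrt_iff] using binomial_real_le_lt hk hq
  · rw [three_mul]
    refine hm.lt_of_measureReal_lt ?_
    simp only [mul_le_mul_iff_right₀ hc, Real.sqrt_le_sqrt_iff (Nat.cast_nonneg _), Nat.cast_le]
    exact binomial_real_ge_nine_mul_lt hk hq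

end Binomial

section BernoulliVector

variable {ι X : Type*} [Fintype ι] [MeasurableSpace X]

open Classical in
lemma pi_bernoulliMeasure_eq_map_setBernoulli (x y : X) (q : I) :
    Measure.pi (fun _ : ι => Ber(x, y, q)) =
      (setBernoulli (Set.univ : Set ι) q).map (fun s i => if i ∈ s then x else y) := by
  have hf : Measurable fun b : Prop => if b then x else y := .of_discrete
  have hber : (Ber(True, False, q)).map (fun b : Prop => if b then x else y) = Ber(x, y, q) := by
    simp [map_bernoulliMeasure' True False hf q]
  calc Measure.pi (fun _ : ι => Ber(x, y, q))
      = Measure.infinitePi fun _ : ι =>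
          (Ber(True, False, q)).map fun b : Prop => if b then x else y := by
        simp_rw [hber, Measure.infinitePi_eq_pi]
    _ = (Measure.infinitePi fun _ : ι => Ber(True, False, q)).map
          fun b i => if b i then x else y := (Measure.infinitePi_map_pi _ fun _ => hf).symm
    _ = (setBernoulli (Set.univ : Set ι) q).map fun s i => if i ∈ s then x else y := by
        rw [setBernoulli_eq_map, Measure.map_map (by fun_prop) (by fun_prop)]
        simp [bernoulliMeasure_def, Function.comp_def]

lemma map_ncard_setBernoulli_univ (q : I) :
    (setBernoulli (Set.univ : Set ι) q).map Set.ncard = Bin(Fintype.card ι, q) := by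
  refine Measure.ext_of_measureReal_singleton fun j => ?_
  rw [map_ncard_setBernoulli_real_singleton Set.finite_univ, binomial_real_singleton,
    Set.ncard_univ, Nat.card_eq_fintype_card]

open Classical in
lemma euclNorm_ite_mem {n : ℕ} (a : ℝ) (s : Set (Fin n)) :
    euclNorm (fun i => if i ∈ s then a else 0) = |a| * √s.ncard := by
  have sum_sq : ∑ i, (if i ∈ s then a else 0) ^ 2 = a ^ 2 * s.ncard := by
    simp [ite_pow, Finset.sum_ite, Set.ncard_eq_toFinset_card', mul_comm]
  rw [euclNorm, sum_sq, Real.sqrt_mul (sq_nonneg a), Real.sqrt_sq_eq_abs]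

lemma measurable_euclNorm {n : ℕ} : Measurable (euclNorm : (Fin n → ℝ) → ℝ) := by
  unfold euclNorm
  fun_prop

lemma identDistrib_euclNorm_pi_bernoulliMeasure (n : ℕ) (a : ℝ) (q : I) :
    IdentDistrib euclNorm (fun N : ℕ => |a| * √N)
      (Measure.pi fun _ : Fin n => Ber(a, 0, q)) Bin(n, q) where
  aemeasurable_fst := measurable_euclNorm.aemeasurable
  aemeasurable_snd := Measurable.of_discrete.aemeasurable
  map_eq := by
    classical
    have binomial_eq : Bin(n, q) = (setBernoulli (Set.univ : Set (Fin n)) q).map Set.ncard := by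
      rw [map_ncard_setBernoulli_univ, Fintype.card_fin]
    rw [pi_bernoulliMeasure_eq_map_setBernoulli, Measure.map_map measurable_euclNorm (by fun_prop),
      binomial_eq, Measure.map_map .of_discrete (by fun_prop)]
    simp only [Function.comp_def, euclNorm_ite_mem]

lemma lintegral_bernoulliMeasure [MeasurableSingletonClass X] (x y : X) (q : I) (f : X → ℝ≥0∞) :
    ∫⁻ z, f z ∂Ber(x, y, q) = ENNReal.ofReal q * f x + ENNReal.ofReal (1 - q) * f y := by
  simp only [bernoulliMeasure_def, lintegral_add_measure, lintegral_smul_measure, lintegral_dirac,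
    ENNReal.smul_def, smul_eq_mul]
  rw [← coe_symm_eq, ENNReal.ofReal_eq_coe_nnreal q.2.1, ENNReal.ofReal_eq_coe_nnreal (σ q).2.1]
  rfl

lemma psipNorm_bernoulliMeasure_le {p K a : ℝ} {q : I} (hp : 0 < p) (hK : 0 < K)
    (h : q * Real.exp (|a| ^ p / K ^ p) ≤ 1 + q) : psipNorm p Ber(a, 0, q) (fun x => x) ≤ K := by
  refine csInf_le ⟨0, fun l hl => hl.1.le⟩ ⟨hK, ?_⟩
  have exp_zero_eq : Real.exp (|(0 : ℝ)| ^ p / K ^ p) = 1 := by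
    rw [abs_zero, Real.zero_rpow hp.ne', zero_div, Real.exp_zero]
  rw [lintegral_bernoulliMeasure, exp_zero_eq, ← ENNReal.ofReal_mul q.2.1,
    ← ENNReal.ofReal_mul (one_minus_nonneg q),
    ← ENNReal.ofReal_add (mul_nonneg q.2.1 (Real.exp_pos _).le) (by simpa using q.2.2),
    ← ENNReal.ofReal_ofNat]
  exact ENNReal.ofReal_le_ofReal (by linarith)

end BernoulliVector

section Deviation

variable {n k : ℕ} {q : I} {a m : ℝ}

lemma IsMedian.exp_le_measure_le_euclNorm_sub (ha : a ≠ 0) (hk : 1 ≤ k) (hkn : 16 * k ≤ n)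
    (hq₂ : (q : ℝ) ≤ 1 / 2) (hq : n * (q : ℝ) = 4 * k)
    (hm : IsMedian (Measure.pi fun _ : Fin n => Ber(a, 0, q)) euclNorm m) :
    ENNReal.ofReal (Real.exp (-(40 * k))) ≤
      (Measure.pi fun _ : Fin n => Ber(a, 0, q)) {x | |a| * √k ≤ euclNorm x - m} := by
  have hZ := identDistrib_euclNorm_pi_bernoulliMeasure n a q
  have m_lt := (((isMedian_congr_identDistrib hZ).1 hm).mem_Ioo_of_mul_sqrt_binomial
    (abs_pos.2 ha) hk hq).2
  have four_mul : √(16 * k : ℕ) = 4 * √k := by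
    rw [Nat.cast_mul, Real.sqrt_mul (by positivity), show ((16 : ℕ) : ℝ) = 4 ^ 2 by norm_num,
      Real.sqrt_sq (by norm_num)]
  calc ENNReal.ofReal (Real.exp (-(40 * k))) ≤ Bin(n, q) {16 * k} :=
        ENNReal.ofReal_le_of_le_toReal
          (exp_neg_forty_mul_le_binomial_real_sixteen_mul hk hkn hq₂ hq)
    _ ≤ Bin(n, q) {N | |a| * √k ≤ |a| * √N - m} := by
        refine measure_mono (Set.singleton_subset_iff.2 ?_)
        rw [Set.mem_ofPred_eq, four_mul]
        linarith
    _ = (Measure.pi fun _ : Fin n => Ber(a, 0, q)) {x | |a| * √k ≤ euclNorm x - m} :=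
        (hZ.measure_mem_eq (s := {z | |a| * √k ≤ z - m})
          (measurableSet_le (by fun_prop) (by fun_prop))).symm

lemma IsMedian.exp_le_measure_euclNorm_sub_le (ha : a ≠ 0) (hk : 1 ≤ k)
    (hq₂ : (q : ℝ) ≤ 1 / 2) (hq : n * (q : ℝ) = 4 * k)
    (hm : IsMedian (Measure.pi fun _ : Fin n => Ber(a, 0, q)) euclNorm m) :
    ENNReal.ofReal (Real.exp (-(40 * k))) ≤
      (Measure.pi fun _ : Fin n => Ber(a, 0, q)) {x | euclNorm x - m ≤ -(|a| * √k)} := by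
  have hZ := identDistrib_euclNorm_pi_bernoulliMeasure n a q
  have lt_m := (((isMedian_congr_identDistrib hZ).1 hm).mem_Ioo_of_mul_sqrt_binomial
    (abs_pos.2 ha) hk hq).1
  calc ENNReal.ofReal (Real.exp (-(40 * k))) ≤ Bin(n, q) {0} :=
        ENNReal.ofReal_le_of_le_toReal (exp_neg_forty_mul_le_binomial_real_zero hq₂ hq)
    _ ≤ Bin(n, q) {N | |a| * √N - m ≤ -(|a| * √k)} := by
        refine measure_mono (Set.singleton_subset_iff.2 ?_)
        rw [Set.mem_ofPred_eq, Nat.cast_zero, Real.sqrt_zero]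
        linarith
    _ = (Measure.pi fun _ : Fin n => Ber(a, 0, q)) {x | euclNorm x - m ≤ -(|a| * √k)} :=
        (hZ.measure_mem_eq (s := {z | z - m ≤ -(|a| * √k)})
          (measurableSet_le (by fun_prop) (by fun_prop))).symm

lemma exists_psipNorm_le_and_deviation {n k : ℕ} {p K : ℝ} (hp : 0 < p) (hK : 0 < K) (hk : 1 ≤ k)
    (hkn : 16 * k ≤ n) :
    ∃ μ : Measure ℝ, IsProbabilityMeasure μ ∧ psipNorm p μ (fun x => x) ≤ K ∧
      ∃ m : ℝ, IsMedian (Measure.pi fun _ : Fin n => μ) euclNorm m ∧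
        ∀ t ≤ K * Real.log (1 + n / (4 * k)) ^ (1 / p) * √k,
          ENNReal.ofReal (Real.exp (-(40 * k))) ≤
            (Measure.pi fun _ : Fin n => μ) {x | t ≤ euclNorm x - m} ∧
          ENNReal.ofReal (Real.exp (-(40 * k))) ≤
            (Measure.pi fun _ : Fin n => μ) {x | euclNorm x - m ≤ -t} := by
  have k_pos : (0 : ℝ) < k := by exact_mod_cast hk
  have k_le : (16 : ℝ) * k ≤ n := by exact_mod_cast hkn
  have n_pos : (0 : ℝ) < n := by linarith
  have q_le : 4 * k / n ≤ (1 / 2 : ℝ) := by rw [div_le_iff₀ n_pos]; linarith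
  let q : I := ⟨4 * k / n, by positivity, by linarith⟩
  have hq : n * (q : ℝ) = 4 * k := mul_div_cancel₀ _ n_pos.ne'
  set l := Real.log (1 + n / (4 * k))
  have l_pos : 0 < l := Real.log_pos (lt_add_of_pos_right 1 (by positivity))
  let a := K * l ^ (1 / p)
  have a_pos : 0 < a := by positivity
  have abs_a_rpow : |a| ^ p / K ^ p = l := by
    rw [abs_of_pos a_pos, ← Real.div_rpow a_pos.le hK.le, mul_div_cancel_left₀ _ hK.ne',
      ← Real.rpow_mul l_pos.le, one_div_mul_cancel hp.ne', Real.rpow_one]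
  have q_mul_exp : q * Real.exp (|a| ^ p / K ^ p) ≤ 1 + q := by
    rw [abs_a_rpow, Real.exp_log (by positivity)]
    refine le_of_eq ?_
    simp only [q]
    field_simp
    ring
  obtain ⟨m, hm⟩ := exists_isMedian (μ := Measure.pi fun _ : Fin n => Ber(a, 0, q))
    measurable_euclNorm.aemeasurable
  have upper := hm.exp_le_measure_le_euclNorm_sub a_pos.ne' hk hkn q_le hq
  have lower := hm.exp_le_measure_euclNorm_sub_le a_pos.ne' hk q_le hq
  rw [abs_of_pos a_pos] at upper lower
  exact ⟨Ber(a, 0, q), inferInstance, psipNorm_bernoulliMeasure_le hp hK q_mul_exp, m, hm,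
    fun t ht => ⟨upper.trans (measure_mono fun x hx => ht.trans hx),
      lower.trans (measure_mono fun x hx => le_trans hx (neg_le_neg ht))⟩⟩

end Deviation

section BlockSize

variable {n s r k : ℝ}

lemma log_two_add_div_le_two_mul_log (hs : 1 ≤ s) (hsn : 512 * s ≤ n) (hk : 0 < k)
    (hks : k ≤ 5 * s) : Real.log (2 + n / s) ≤ 2 * Real.log (1 + n / (4 * k)) := by
  have s_pos : 0 < s := by linarith
  have x_ge : 512 ≤ n / s := by rwa [le_div_iff₀ s_pos]
  have div_ge : n / s / 20 ≤ n / (4 * k) := by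
    rw [div_div]
    exact div_le_div_of_nonneg_left (by linarith) (by positivity) (by linarith)
  calc Real.log (2 + n / s) ≤ Real.log ((1 + n / (4 * k)) ^ 2) := by
        gcongr
        nlinarith
    _ = 2 * Real.log (1 + n / (4 * k)) := by rw [Real.log_pow, Nat.cast_ofNat]

lemma div_log_rpow_le (hr : 0 ≤ r) (hs : 0 ≤ s) (hsn : s ≤ n) :
    s / Real.log (2 + n / s) ^ r ≤ s := by
  rcases hs.eq_or_lt with rfl | hs
  · simp
  refine div_le_self hs.le (Real.one_le_rpow ?_ hr)
  have : 1 ≤ n / s := by rwa [one_le_div hs]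
  rw [Real.le_log_iff_exp_le (by linarith)]
  linarith [Real.exp_one_lt_three]

lemma le_log_rpow_mul (hr : r ∈ Set.Icc 0 2) (hs : 0 ≤ s) (hn : 512 ≤ n) (hsn : 512 * s ≤ n)
    (hk : 1 ≤ k) (hks : k ≤ 4 * s + 1) (hku : 4 * (s / Real.log (2 + n / s) ^ r) ≤ k) :
    s ≤ Real.log (1 + n / (4 * k)) ^ r * k := by
  obtain ⟨hr₀, hr₂⟩ := hr
  rcases le_total s 1 with hs₁ | hs₁
  · have one_le_log : 1 ≤ Real.log (1 + n / (4 * k)) := by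
      rw [Real.le_log_iff_exp_le (by positivity)]
      have : 2 ≤ n / (4 * k) := by rw [le_div_iff₀ (by positivity)]; linarith
      linarith [Real.exp_one_lt_three]
    nlinarith [Real.one_le_rpow one_le_log hr₀]
  · -- Here `k ≤ 5 * s`, so the two logarithms agree up to a factor 2, whose `r`-th power is at
    -- most the factor 4 in `hku`.
    set L := Real.log (2 + n / s)
    set l := Real.log (1 + n / (4 * k))
    have L_pos : 0 < L := Real.log_pos (by linarith [div_nonneg (by linarith : 0 ≤ n) hs])
    have L_le : L ≤ 2 * l :=
      log_two_add_div_le_two_mul_log hs₁ hsn (by linarith) (by linarith)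
    have l_nonneg : 0 ≤ l := by linarith
    have rpow_le : L ^ r ≤ 4 * l ^ r :=
      calc L ^ r ≤ (2 * l) ^ r := by gcongr
        _ = 2 ^ r * l ^ r := Real.mul_rpow zero_le_two l_nonneg
        _ ≤ 2 ^ (2 : ℝ) * l ^ r := by gcongr; norm_num
        _ = 4 * l ^ r := by norm_num
    calc s = L ^ r * (s / L ^ r) := by field_simp
      _ ≤ 4 * l ^ r * (s / L ^ r) := by gcongr
      _ = l ^ r * (4 * (s / L ^ r)) := by ring
      _ ≤ l ^ r * k := by gcongr

lemma exists_nat_le_log_rpow_mul (hr : r ∈ Set.Icc 0 2) (hs : 0 ≤ s) (hn : 512 ≤ n)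
    (hsn : 512 * s ≤ n) :
    ∃ k : ℕ, 1 ≤ k ∧ 16 * k ≤ n ∧ k ≤ 4 * (s / Real.log (2 + n / s) ^ r) + 1 ∧
      s ≤ Real.log (1 + n / (4 * k)) ^ r * k := by
  set u := s / Real.log (2 + n / s) ^ r
  have u_nonneg : 0 ≤ u := by
    have : 0 ≤ n / s := div_nonneg (by linarith) hs
    have : 0 ≤ Real.log (2 + n / s) := Real.log_nonneg (by linarith)
    positivity
  have u_le : u ≤ s := div_log_rpow_le hr.1 hs (by linarith)
  have le_floor : ((⌊4 * u⌋₊ + 1 : ℕ) : ℝ) ≤ 4 * u + 1 := by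
    push_cast
    gcongr
    exact Nat.floor_le (by positivity)
  refine ⟨⌊4 * u⌋₊ + 1, by omega, by linarith, le_floor, ?_⟩
  refine le_log_rpow_mul hr hs hn hsn (by simp) (by linarith) ?_
  push_cast
  exact (Nat.lt_floor_add_one _).le

lemma mul_sq_div_le {n C K t : ℝ} (hn : 0 ≤ n) (hK : 0 < K) (hC : 1 ≤ C) (ht : 0 ≤ t)
    (htn : t ≤ K / C * √n) : C * (t / K) ^ 2 ≤ n := by
  have mul_le : C * (t / K) ≤ √n := by
    rw [mul_div, div_le_iff₀ hK, ← le_div_iff₀' (by linarith)]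
    exact htn.trans_eq (by ring)
  calc C * (t / K) ^ 2 ≤ C ^ 2 * (t / K) ^ 2 := by gcongr; exact le_self_pow₀ hC two_ne_zero
    _ = (C * (t / K)) ^ 2 := (mul_pow _ _ _).symm
    _ ≤ √n ^ 2 := by gcongr
    _ = n := Real.sq_sqrt hn

lemma le_mul_rpow_mul_sqrt {t K l p : ℝ} (hK : 0 < K) (hl : 0 ≤ l)
    (h : (t / K) ^ 2 ≤ l ^ (2 / p) * k) : t ≤ K * l ^ (1 / p) * √k := by
  have sqrt_rpow : √(l ^ (2 / p)) = l ^ (1 / p) := by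
    rw [Real.sqrt_eq_rpow, ← Real.rpow_mul hl]
    ring_nf
  have div_le : t / K ≤ l ^ (1 / p) * √k := by
    rw [← sqrt_rpow, ← Real.sqrt_mul (by positivity)]
    exact (le_abs_self _).trans (Real.abs_le_sqrt h)
  rw [div_le_iff₀ hK] at div_le
  linarith

lemma exists_nat_le_mul_log_rpow_mul_sqrt {p K C t : ℝ} (hp : 1 ≤ p) (hK : 0 < K) (hC : 512 ≤ C)
    (hCn : C ≤ n) (ht : 0 ≤ t) (htn : t ≤ K / C * √n) :
    ∃ k : ℕ, 1 ≤ k ∧ 16 * k ≤ n ∧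
      k ≤ 4 * (t ^ 2 / (K ^ 2 * Real.log (2 + K ^ 2 * n / t ^ 2) ^ (2 / p))) + 1 ∧
      t ≤ K * Real.log (1 + n / (4 * k)) ^ (1 / p) * √k := by
  have hn : 512 ≤ n := hC.trans hCn
  have two_div_p_mem : 2 / p ∈ Set.Icc 0 2 :=
    ⟨by positivity, div_le_self zero_le_two hp⟩
  have sq_le : 512 * (t / K) ^ 2 ≤ n :=
    calc 512 * (t / K) ^ 2 ≤ C * (t / K) ^ 2 := by gcongr
      _ ≤ n := mul_sq_div_le (by linarith) hK (by linarith) ht htn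
  obtain ⟨k, hk, hkn, hku, hks⟩ :=
    exists_nat_le_log_rpow_mul two_div_p_mem (sq_nonneg (t / K)) hn sq_le
  have log_nonneg : 0 ≤ Real.log (1 + n / (4 * k)) :=
    Real.log_nonneg (le_add_of_nonneg_right (by positivity))
  refine ⟨k, hk, hkn, ?_, le_mul_rpow_mul_sqrt hK log_nonneg hks⟩
  rwa [div_pow, div_div_eq_mul_div, mul_comm n, div_div] at hku

end BlockSize

lemma five_hundred_twelve_le_exp_forty : 512 ≤ Real.exp 40 :=
  calc (512 : ℝ) = 2 ^ 9 := by norm_num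
    _ ≤ Real.exp 1 ^ 9 := by gcongr; exact Real.exp_one_gt_two.le
    _ ≤ Real.exp 40 := by rw [← Real.exp_nat_mul, Real.exp_le_exp]; norm_num

lemma inv_exp_mul_exp_neg_le {c C u k : ℝ} (hc : 0 ≤ c) (hC : 4 * c ≤ C) (hu : 0 ≤ u)
    (hk : k ≤ 4 * u + 1) : (Real.exp c)⁻¹ * Real.exp (-(C * u)) ≤ Real.exp (-(c * k)) := by
  rw [← Real.exp_neg, ← Real.exp_add, Real.exp_le_exp]
  nlinarith

theorem norm_example_two_sided_general :
    ∃ C : ℝ, 1 < C ∧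
      ∀ n : ℕ, C ≤ n → ∀ p : ℝ, 1 ≤ p → ∀ K : ℝ, 0 < K →
      ∀ t : ℝ, 0 ≤ t → t ≤ K / C * Real.sqrt n →
      ∃ μ : Measure ℝ, IsProbabilityMeasure μ ∧ psipNorm p μ (fun x => x) ≤ K ∧
      ∃ m : ℝ, IsMedian (Measure.pi fun _ : Fin n => μ) (fun x => euclNorm x) m ∧
        ENNReal.ofReal (C⁻¹ * Real.exp
            (-(C * t ^ 2 / (K ^ 2 * Real.log (2 + K ^ 2 * n / t ^ 2) ^ ((2 : ℝ) / p))))) ≤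
          (Measure.pi fun _ : Fin n => μ) {x | t ≤ euclNorm x - m} ∧
        ENNReal.ofReal (C⁻¹ * Real.exp
            (-(C * t ^ 2 / (K ^ 2 * Real.log (2 + K ^ 2 * n / t ^ 2) ^ ((2 : ℝ) / p))))) ≤
          (Measure.pi fun _ : Fin n => μ) {x | euclNorm x - m ≤ -t} := by
  refine ⟨Real.exp 40, Real.one_lt_exp_iff.2 (by norm_num), fun n hn p hp K hK t ht htn => ?_⟩
  obtain ⟨k, hk, hkn, hku, htk⟩ := exists_nat_le_mul_log_rpow_mul_sqrt hp hK
    five_hundred_twelve_le_exp_forty hn ht htn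
  obtain ⟨μ, hμ, hψ, m, hm, deviation⟩ :=
    exists_psipNorm_le_and_deviation (zero_lt_one.trans_le hp) hK hk (by exact_mod_cast hkn)
  obtain ⟨upper, lower⟩ := deviation t htk
  have log_nonneg : 0 ≤ Real.log (2 + K ^ 2 * n / t ^ 2) :=
    Real.log_nonneg (by linarith [show 0 ≤ K ^ 2 * n / t ^ 2 by positivity])
  have prob_le := ENNReal.ofReal_le_ofReal <| inv_exp_mul_exp_neg_le (c := 40)
    (C := Real.exp 40) (by norm_num) (by linarith [five_hundred_twelve_le_exp_forty])
    (by positivity) hku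
  rw [← mul_div_assoc] at prob_le
  exact ⟨μ, hμ, hψ, m, hm, prob_le.trans upper, prob_le.trans lower⟩

theorem norm_example_two_sided :
    ∃ C : ℝ, 1 < C ∧
      ∀ n : ℕ, C ≤ n → ∀ p : ℝ, p ∈ Set.Icc (1 : ℝ) 2 → ∀ K : ℝ, 0 < K →
      ∀ t : ℝ, 0 ≤ t → t ≤ K / C * Real.sqrt n →
      -- the random vector `X` is the identity on `Fin n → ℝ` equipped with the
      -- i.i.d. product measure `Measure.pi (fun _ => μ)`
      ∃ μ : Measure ℝ, IsProbabilityMeasure μ ∧ psipNorm p μ (fun x => x) ≤ K ∧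
      ∃ m : ℝ, IsMedian (Measure.pi fun _ : Fin n => μ) (fun x => euclNorm x) m ∧
        ENNReal.ofReal (C⁻¹ * Real.exp
            (-(C * t ^ 2 / (K ^ 2 * Real.log (2 + K ^ 2 * n / t ^ 2) ^ ((2 : ℝ) / p))))) ≤
          (Measure.pi fun _ : Fin n => μ) {x | t ≤ euclNorm x - m} ∧
        ENNReal.ofReal (C⁻¹ * Real.exp
            (-(C * t ^ 2 / (K ^ 2 * Real.log (2 + K ^ 2 * n / t ^ 2) ^ ((2 : ℝ) / p))))) ≤
          (Measure.pi fun _ : Fin n => μ) {x | euclNorm x - m ≤ -t} := by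
  obtain ⟨C, hC, h⟩ := norm_example_two_sided_general
  exact ⟨C, hC, fun n hn p hp => h n hn p hp.1⟩
end

section
/- There exist universal constants c_b > 0 and C_b > 1 so that the following holds. Let n be a sufficiently large integer (n greater than a universal constant), let θ ∈ [1/(c_b·n), c_b], and let Y_1,…,Y_n be i.i.d. Bernoulli random variables with parameter θ. Then for every real r with 0 ≤ r ≤ n − θ·n, one has ℙ{ Σ_{i=1}^n Y_i ≥ θ·n + r } ≥ (1/C_b)·exp( −C_b · log(2 + (θ·n + r)/(θ·n)) · r²/(θ·n + r) ). -/
open MeasureTheory ENNReal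

/-- `μ` is the Bernoulli measure with parameter `θ` (as a measure on `ℝ`):
it is a probability measure giving mass `θ` to `{1}` and mass `1-θ` to `{0}`. -/
def IsBernoulli (μ : Measure ℝ) (θ : ℝ) : Prop :=
  IsProbabilityMeasure μ ∧ μ {1} = ENNReal.ofReal θ ∧ μ {0} = ENNReal.ofReal (1 - θ)

/-!
Let `m = p * n` be the mean of the binomial law. By Chebyshev, the window `|k - m| < 2 * √m` has
mass at least `3 / 4`. Translating it by `s ≈ r + 2 * √m` moves it beyond `m + r` while keeping it
below `m + t`, where `t = r + 5 * √m`. Consecutive point masses decrease, up to `m + t`, by at most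
the factor `ρ = (1 - t / (n - m)) / (1 + t / m)`, so the tail has mass at least `3 / 4 * ρ ^ s`.
If `t ≤ (n - m) / 2`, then `ρ ≥ (1 + t / m) ^ (-3)`, and `s * log (1 + t / m)` is of order
`log (2 + (m + r) / m) * r ^ 2 / (m + r) + 1`. Otherwise `r` is comparable to `n`, and the single
outcome `k = n`, of mass `p ^ n`, suffices.
-/

/-- The rate in the lower bound `exp (-C * tailRate m r)` for the probability that a binomial
variable of mean `m` exceeds its mean by at least `r`. -/
noncomputable def tailRate (m r : ℝ) : ℝ :=
  Real.log (2 + (m + r) / m) * r ^ 2 / (m + r)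

section TailRate

variable {m r t : ℝ}

lemma one_le_log_two_add_div (hm : 0 < m) (hr : 0 ≤ r) : 1 ≤ Real.log (2 + (m + r) / m) := by
  have one_le : 1 ≤ (m + r) / m := by rw [le_div_iff₀ hm]; linarith
  rw [Real.le_log_iff_exp_le (by linarith)]
  linarith [Real.exp_one_lt_three]

lemma tailRate_nonneg (hm : 0 < m) (hr : 0 ≤ r) : 0 ≤ tailRate m r := by
  have := one_le_log_two_add_div hm hr
  unfold tailRate
  positivity

lemma tailRate_monotoneOn (hm : 0 < m) : MonotoneOn (tailRate m) (Set.Ici 0) := by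
  intro r (hr : 0 ≤ r) t (ht : 0 ≤ t) hrt
  have hlog := one_le_log_two_add_div hm ht
  have hquot : r ^ 2 / (m + r) ≤ t ^ 2 / (m + t) := by
    rw [div_le_div_iff₀ (by positivity) (by positivity)]
    have hsq : r ^ 2 ≤ t ^ 2 := by gcongr
    nlinarith [mul_le_mul_of_nonneg_left hrt (mul_nonneg hr ht)]
  simp only [tailRate, mul_div_assoc]
  gcongr

lemma tailRate_mul_le {κ : ℝ} (hm : 0 < m) (hr : 0 ≤ r) (hκ : 1 ≤ κ) :
    tailRate m (κ * r) ≤ κ ^ 3 * tailRate m r := by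
  have hκr : r ≤ κ * r := le_mul_of_one_le_left hr hκ
  have hlog := one_le_log_two_add_div hm hr
  have hlog_mul : Real.log (2 + (m + κ * r) / m) ≤ κ * Real.log (2 + (m + r) / m) :=
    calc
      Real.log (2 + (m + κ * r) / m) ≤ Real.log (κ * (2 + (m + r) / m)) := by
        have hle : (m + κ * r) / m ≤ κ * ((m + r) / m) := by
          rw [← mul_div_assoc]
          gcongr
          nlinarith
        apply Real.log_le_log (by positivity)
        linarith
      _ = Real.log κ + Real.log (2 + (m + r) / m) :=
        Real.log_mul (by positivity) (by positivity)
      _ ≤ κ * Real.log (2 + (m + r) / m) := by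
        nlinarith [Real.log_le_sub_one_of_pos (zero_lt_one.trans_le hκ)]
  calc
    tailRate m (κ * r) ≤ κ * Real.log (2 + (m + r) / m) * (κ * r) ^ 2 / (m + r) := by
      unfold tailRate
      gcongr
    _ = κ ^ 3 * tailRate m r := by unfold tailRate; ring

lemma tailRate_sqrt_le_two (hm : 0 < m) : tailRate m √m ≤ 2 := by
  obtain ⟨a, ha, rfl⟩ : ∃ a, 0 < a ∧ m = a ^ 2 :=
    ⟨√m, Real.sqrt_pos.2 hm, (Real.sq_sqrt hm.le).symm⟩
  rw [Real.sqrt_sq ha.le, tailRate, div_le_iff₀ (by positivity)]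
  have hlog : Real.log (2 + (a ^ 2 + a) / a ^ 2) ≤ 2 + 1 / a := by
    refine (Real.log_le_sub_one_of_pos (by positivity)).trans_eq ?_
    field_simp
    ring
  calc
    Real.log (2 + (a ^ 2 + a) / a ^ 2) * a ^ 2 ≤ (2 + 1 / a) * a ^ 2 := by gcongr
    _ = 2 * a ^ 2 + a := by field_simp
    _ ≤ 2 * (a ^ 2 + a) := by linarith

lemma tailRate_add_sqrt_le (hm : 0 < m) (hr : 0 ≤ r) :
    tailRate m (r + 5 * √m) ≤ 216 * tailRate m r + 432 := by
  have hmax_le : tailRate m (max r √m) ≤ tailRate m r + 2 := by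
    rcases max_choice r √m with h | h <;> rw [h]
    · linarith
    · linarith [tailRate_sqrt_le_two hm, tailRate_nonneg hm hr]
  have hmax_nonneg : 0 ≤ max r √m := hr.trans (le_max_left _ _)
  calc
    tailRate m (r + 5 * √m) ≤ tailRate m (6 * max r √m) :=
      tailRate_monotoneOn hm (Set.mem_Ici.2 (by positivity)) (Set.mem_Ici.2 (by positivity))
        (by linarith [le_max_left r √m, le_max_right r √m])
    _ ≤ 6 ^ 3 * tailRate m (max r √m) := tailRate_mul_le hm hmax_nonneg (by norm_num)
    _ ≤ 216 * tailRate m r + 432 := by linarith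

lemma log_one_add_div_le (hm : 0 < m) (ht : 0 ≤ t) :
    Real.log (1 + t / m) ≤ 2 * (Real.log (2 + (m + t) / m) * (t / (m + t))) := by
  have hlog := one_le_log_two_add_div hm ht
  rcases le_total t m with htm | hmt
  · have hquot : t / m ≤ 2 * (t / (m + t)) := by
      rw [← mul_div_assoc, div_le_div_iff₀ hm (by positivity)]
      nlinarith
    calc
      Real.log (1 + t / m) ≤ t / m := by
        linarith [Real.log_le_sub_one_of_pos (show 0 < 1 + t / m by positivity)]
      _ ≤ 2 * (1 * (t / (m + t))) := by rwa [one_mul]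
      _ ≤ 2 * (Real.log (2 + (m + t) / m) * (t / (m + t))) := by gcongr
  · have hquot : 1 / 2 ≤ t / (m + t) := by
      rw [div_le_div_iff₀ two_pos (by positivity)]
      linarith
    calc
      Real.log (1 + t / m) ≤ Real.log (2 + (m + t) / m) := by
        apply Real.log_le_log (by positivity)
        rw [add_div, div_self hm.ne']
        linarith
      _ = 2 * (Real.log (2 + (m + t) / m) * (1 / 2)) := by ring
      _ ≤ 2 * (Real.log (2 + (m + t) / m) * (t / (m + t))) := by gcongr

lemma inv_one_add_sq_le_one_sub {x : ℝ} (hx : 0 ≤ x) (hx' : x ≤ 1 / 2) :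
    ((1 + x) ^ 2)⁻¹ ≤ 1 - x := by
  rw [inv_le_iff_one_le_mul₀ (by positivity)]
  nlinarith [mul_nonneg hx (sub_nonneg.2 hx')]

-- With `m = p * n` and `l = n - m`, the right-hand side is the ratio of consecutive point masses at
-- `m + t`.
lemma exp_neg_le_one_sub_div_one_add {l : ℝ} (hm : 0 < m) (hml : m ≤ l) (ht : 0 ≤ t)
    (htl : t ≤ l / 2) :
    Real.exp (-(6 * (Real.log (2 + (m + t) / m) * (t / (m + t))))) ≤
      (1 - t / l) / (1 + t / m) := by
  have hl : 0 < l := hm.trans_le hml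
  have hfail : ((1 + t / m) ^ 2)⁻¹ ≤ 1 - t / l :=
    calc
      ((1 + t / m) ^ 2)⁻¹ ≤ ((1 + t / l) ^ 2)⁻¹ := by gcongr
      _ ≤ 1 - t / l :=
        inv_one_add_sq_le_one_sub (by positivity) (by rw [div_le_iff₀ hl]; linarith)
  calc
    Real.exp (-(6 * (Real.log (2 + (m + t) / m) * (t / (m + t)))))
        ≤ Real.exp (-(3 * Real.log (1 + t / m))) := by
      rw [Real.exp_le_exp]
      linarith [log_one_add_div_le hm ht]
    _ = ((1 + t / m) ^ 2)⁻¹ / (1 + t / m) := by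
      rw [Real.exp_neg, mul_comm, Real.exp_mul, Real.exp_log (by positivity), Real.rpow_ofNat,
        pow_succ, mul_inv, div_eq_mul_inv _ (1 + t / m)]
    _ ≤ (1 - t / l) / (1 + t / m) := by gcongr

lemma exp_neg_tailRate_le_pow {n : ℕ} {θ : ℝ} (hn : 0 < n) (hθ : 0 < θ) (hr : n / 4 ≤ r)
    (hrn : θ * n + r ≤ n) : Real.exp (-(32 * tailRate (θ * n) r)) ≤ θ ^ n := by
  have hm : 0 < θ * n := mul_pos hθ (Nat.cast_pos.2 hn)
  have hlog_nonneg : 0 ≤ Real.log (1 / θ) :=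
    Real.log_nonneg (by rw [le_div_iff₀ hθ]; nlinarith)
  have hlog : Real.log (1 / θ) ≤ 2 * Real.log (2 + (θ * n + r) / (θ * n)) := by
    have hquot : 1 / (4 * θ) ≤ r / (θ * n) := by
      rw [div_le_div_iff₀ (by positivity) hm]
      nlinarith
    calc
      Real.log (1 / θ) ≤ Real.log ((2 + (1 + 1 / (4 * θ))) ^ 2) := by
        apply Real.log_le_log (by positivity)
        have hexpand : (2 + (1 + 1 / (4 * θ))) ^ 2
            = 1 / θ + (9 + 1 / (2 * θ) + (1 / (4 * θ)) ^ 2) := by field_simp; ring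
        rw [hexpand]
        exact le_add_of_nonneg_right (by positivity)
      _ = 2 * Real.log (2 + (1 + 1 / (4 * θ))) := by rw [Real.log_pow, Nat.cast_ofNat]
      _ ≤ 2 * Real.log (2 + (θ * n + r) / (θ * n)) := by
        rw [add_div, div_self hm.ne']
        gcongr
  have hquot : (n : ℝ) / 16 ≤ r ^ 2 / (θ * n + r) := by
    rw [le_div_iff₀ (by linarith)]
    nlinarith
  have hrate : n * Real.log (1 / θ) ≤ 32 * tailRate (θ * n) r :=
    calc
      n * Real.log (1 / θ) = 32 * (Real.log (1 / θ) / 2 * (n / 16)) := by ring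
      _ ≤ 32 * (Real.log (2 + (θ * n + r) / (θ * n)) * (r ^ 2 / (θ * n + r))) := by
        gcongr <;> linarith
      _ = 32 * tailRate (θ * n) r := by rw [tailRate, mul_div_assoc]
  calc
    Real.exp (-(32 * tailRate (θ * n) r)) ≤ Real.exp (-(n * Real.log (1 / θ))) := by gcongr
    _ = θ ^ n := by
      rw [one_div, Real.log_inv, mul_neg, neg_neg, Real.exp_nat_mul, Real.exp_log hθ]

end TailRate

section Binomial

open ProbabilityTheory unitInterval

variable {n : ℕ} {p : I}

lemma integral_sq_sub_binomial (n : ℕ) (p : I) :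
    ∫ k, (p * n - k : ℝ) ^ 2 ∂Bin(n, p) = n * p * (1 - p) := by
  have h := congrArg (Polynomial.eval (p : ℝ)) (bernsteinPolynomial.variance ℝ n)
  simp only [Polynomial.eval_finsetSum, bernsteinPolynomial, Polynomial.eval_mul,
    Polynomial.eval_pow, Polynomial.eval_sub, Polynomial.eval_one, Polynomial.eval_X,
    Polynomial.eval_natCast, nsmul_eq_mul] at h
  rw [integral_binomial, ← h, Nat.range_succ_eq_Iic]
  exact Finset.sum_congr rfl fun k _ => by rw [smul_eq_mul]; ring

lemma binomial_real_le_abs_sub_le {δ : ℝ} (hδ : 0 < δ) :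
    Bin(n, p).real {k | δ ≤ |p * (n : ℝ) - k|} ≤ n * p * (1 - p) / δ ^ 2 := by
  have hmarkov := mul_meas_ge_le_integral_of_nonneg (μ := Bin(n, p))
    (f := fun k => (p * n - k : ℝ) ^ 2) (.of_forall fun _ => sq_nonneg _)
    (integrable_binomial _) (δ ^ 2)
  rw [integral_sq_sub_binomial] at hmarkov
  simp only [← sq_abs (_ - _ : ℝ), sq_le_sq₀ hδ.le (abs_nonneg _)] at hmarkov
  rwa [le_div_iff₀' (by positivity)]

lemma three_div_four_le_binomial_real_abs_sub_lt (hm : 0 < p * (n : ℝ)) :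
    3 / 4 ≤ Bin(n, p).real {k | |p * (n : ℝ) - k| < 2 * √(p * (n : ℝ))} := by
  have hcompl := probReal_compl_eq_one_sub (μ := Bin(n, p))
    (s := {k | 2 * √(p * (n : ℝ)) ≤ |p * (n : ℝ) - k|}) .of_discrete
  simp only [Set.compl_ofPred, not_le] at hcompl
  have hquarter : n * (p : ℝ) * (1 - p) / (2 * √(p * (n : ℝ))) ^ 2 ≤ 1 / 4 := by
    rw [mul_pow, Real.sq_sqrt hm.le, div_le_iff₀ (by positivity)]
    nlinarith [p.2.1]
  rw [hcompl]
  linarith [binomial_real_le_abs_sub_le (n := n) (p := p) (δ := 2 * √(p * (n : ℝ))) (by positivity)]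

lemma binomial_real_singleton_succ_mul (n : ℕ) (p : I) (j : ℕ) :
    Bin(n, p).real {j + 1} * ((j + 1) * (1 - p)) = Bin(n, p).real {j} * ((n - j) * p) := by
  simp only [binomial_real_singleton]
  rcases lt_trichotomy j n with hj | rfl | hj
  · have hchoose : (n.choose (j + 1) : ℝ) * (j + 1) = n.choose j * (n - j) := by
      rw [← Nat.cast_sub hj.le]
      exact_mod_cast n.choose_succ_right_eq j
    obtain ⟨d, rfl⟩ := Nat.exists_eq_add_of_lt hj
    rw [show j + d + 1 - (j + 1) = d by omega, show j + d + 1 - j = d + 1 by omega]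
    linear_combination (p : ℝ) ^ (j + 1) * (1 - p) ^ (d + 1) * hchoose
  · simp
  · simp [Nat.choose_eq_zero_of_lt hj, Nat.choose_eq_zero_of_lt (hj.trans j.lt_succ_self)]

variable {ρ x : ℝ} {s : ℕ}

lemma pow_mul_binomial_real_singleton_le {j : ℕ} (hp : p < 1) (hρ : 0 ≤ ρ)
    (hρx : ρ * (x * (1 - p)) ≤ (n - x) * p) (hjs : (j + s : ℝ) ≤ x) :
    ρ ^ s * Bin(n, p).real {j} ≤ Bin(n, p).real {j + s} := by
  have hp' : (0 : ℝ) < 1 - p := sub_pos.2 hp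
  induction s with
  | zero => simp
  | succ s ih =>
    push_cast at hjs
    have hratio : ρ * ((j + s + 1) * (1 - p)) ≤ (n - (j + s)) * p :=
      calc
        ρ * ((j + s + 1) * (1 - p)) ≤ ρ * (x * (1 - p)) := by gcongr; linarith
        _ ≤ (n - x) * p := hρx
        _ ≤ (n - (j + s)) * p := mul_le_mul_of_nonneg_right (by linarith) p.2.1
    have hstep : ρ * Bin(n, p).real {j + s} ≤ Bin(n, p).real {j + s + 1} := by
      have hsucc := binomial_real_singleton_succ_mul n p (j + s)
      push_cast at hsucc
      refine le_of_mul_le_mul_right ?_ (show 0 < (j + s + 1 : ℝ) * (1 - p) by positivity)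
      rw [hsucc, mul_right_comm, mul_comm (Bin(n, p).real _)]
      gcongr
    calc
      ρ ^ (s + 1) * Bin(n, p).real {j} = ρ * (ρ ^ s * Bin(n, p).real {j}) := by ring
      _ ≤ ρ * Bin(n, p).real {j + s} := by gcongr; exact ih (by linarith)
      _ ≤ Bin(n, p).real {j + (s + 1)} := hstep

lemma pow_mul_binomial_real_le_image_add {A : Set ℕ} (hp : p < 1) (hρ : 0 ≤ ρ)
    (hρx : ρ * (x * (1 - p)) ≤ (n - x) * p) (hA : ∀ j ∈ A, (j + s : ℝ) ≤ x) :
    ρ ^ s * Bin(n, p).real A ≤ Bin(n, p).real ((· + s) '' A) := by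
  have hfinite : A.Finite := (Set.finite_Iic ⌊x⌋₊).subset fun j hj =>
    Nat.le_floor (by linarith [hA j hj, (s.cast_nonneg : (0 : ℝ) ≤ s)])
  lift A to Finset ℕ using hfinite
  rw [← Finset.coe_image, ← sum_measureReal_singleton, ← sum_measureReal_singleton,
    Finset.sum_image (add_left_injective s).injOn, Finset.mul_sum]
  exact Finset.sum_le_sum fun j hj => pow_mul_binomial_real_singleton_le hp hρ hρx (hA j hj)

lemma pow_mul_le_binomial_real_ge {y : ℝ} (hm : 0 < p * (n : ℝ)) (hp : p < 1) (hρ : 0 ≤ ρ)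
    (hρx : ρ * (x * (1 - p)) ≤ (n - x) * p) (hx : p * (n : ℝ) + 2 * √(p * (n : ℝ)) + s ≤ x)
    (hy : y ≤ p * (n : ℝ) - 2 * √(p * (n : ℝ)) + s) :
    ρ ^ s * (3 / 4) ≤ Bin(n, p).real {k | y ≤ k} :=
  calc
    ρ ^ s * (3 / 4) ≤ ρ ^ s * Bin(n, p).real {k | |p * (n : ℝ) - k| < 2 * √(p * (n : ℝ))} := by
      gcongr
      exact three_div_four_le_binomial_real_abs_sub_lt hm
    _ ≤ Bin(n, p).real ((· + s) '' {k | |p * (n : ℝ) - k| < 2 * √(p * (n : ℝ))}) := by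
      refine pow_mul_binomial_real_le_image_add hp hρ hρx fun j hj => ?_
      rw [Set.mem_ofPred_eq, abs_lt] at hj
      linarith
    _ ≤ Bin(n, p).real {k | y ≤ k} := by
      refine measureReal_mono ?_
      rintro _ ⟨j, hj, rfl⟩
      rw [Set.mem_ofPred_eq, abs_lt] at hj
      simp only [Set.mem_ofPred_eq, Nat.cast_add]
      linarith

lemma one_sub_div_one_add_mul_eq {t : ℝ} (hm : 0 < p * (n : ℝ)) (hp : p < 1) (ht : 0 ≤ t) :
    (1 - t / (n - p * n)) / (1 + t / (p * (n : ℝ))) * ((p * n + t) * (1 - p))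
      = (n - (p * n + t)) * p := by
  have hp' : (0 : ℝ) < 1 - p := sub_pos.2 hp
  have hp₀ : (p : ℝ) ≠ 0 := left_ne_zero_of_mul hm.ne'
  have hn₀ : (n : ℝ) ≠ 0 := right_ne_zero_of_mul hm.ne'
  have hmt : (n * p + t : ℝ) ≠ 0 := by rw [mul_comm]; positivity
  rw [show (n - p * n : ℝ) = n * (1 - p) by ring, one_add_div hm.ne']
  field_simp [hmt]
  ring

lemma exp_neg_tailRate_add_sqrt_le_binomial_real {r : ℝ} (hm : 1 ≤ p * (n : ℝ))
    (hp : (p : ℝ) ≤ 1 / 2) (hr : 0 ≤ r) (hrn : r + 5 * √(p * (n : ℝ)) ≤ (n - p * n) / 2) :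
    Real.exp (-(6 * tailRate (p * (n : ℝ)) (r + 5 * √(p * (n : ℝ))))) * (3 / 4) ≤
      Bin(n, p).real {k | p * (n : ℝ) + r ≤ k} := by
  have hp₁ : (p : ℝ) < 1 := by linarith
  set m := p * (n : ℝ)
  have hm₀ : 0 < m := by linarith
  have hsqrt : 1 ≤ √m := Real.one_le_sqrt.2 hm
  set t := r + 5 * √m
  have ht : 0 ≤ t := by positivity
  set s := ⌈r + 2 * √m⌉₊
  have hs : r + 2 * √m ≤ s := Nat.le_ceil _
  have hst : s + 2 * √m ≤ t := by
    linarith [Nat.ceil_lt_add_one (show 0 ≤ r + 2 * √m by positivity)]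
  set a := Real.log (2 + (m + t) / m) * (t / (m + t)) with ha
  have ha₀ : 0 ≤ a := mul_nonneg (by linarith [one_le_log_two_add_div hm₀ ht]) (by positivity)
  have hratio : Real.exp (-(6 * a)) * ((m + t) * (1 - p)) ≤ (n - (m + t)) * p := by
    rw [← one_sub_div_one_add_mul_eq hm₀ hp₁ ht]
    have := sub_pos.2 hp₁
    gcongr
    exact exp_neg_le_one_sub_div_one_add hm₀ (by nlinarith) ht hrn
  have hpow : Real.exp (-(6 * tailRate m t)) ≤ Real.exp (-(6 * a)) ^ s := by
    have hst' : (s : ℝ) ≤ t := by linarith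
    rw [← Real.exp_nat_mul, Real.exp_le_exp, mul_neg, neg_le_neg_iff]
    calc
      s * (6 * a) ≤ t * (6 * a) := by gcongr
      _ = 6 * tailRate m t := by rw [ha, tailRate]; ring
  calc
    Real.exp (-(6 * tailRate m t)) * (3 / 4) ≤ Real.exp (-(6 * a)) ^ s * (3 / 4) := by gcongr
    _ ≤ Bin(n, p).real {k | m + r ≤ k} :=
      pow_mul_le_binomial_real_ge hm₀ hp₁ (Real.exp_nonneg _) hratio (by linarith) (by linarith)

lemma exp_neg_tailRate_le_binomial_real_of_le {r : ℝ} (hn : 0 < n) (hp : 0 < p)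
    (hr : n / 4 ≤ r) (hrn : p * (n : ℝ) + r ≤ n) :
    Real.exp (-(32 * tailRate (p * (n : ℝ)) r)) ≤ Bin(n, p).real {k | p * (n : ℝ) + r ≤ k} :=
  calc
    Real.exp (-(32 * tailRate (p * (n : ℝ)) r)) ≤ (p : ℝ) ^ n :=
      exp_neg_tailRate_le_pow hn hp hr hrn
    _ = Bin(n, p).real {n} := (binomial_real_self n p).symm
    _ ≤ Bin(n, p).real {k | p * (n : ℝ) + r ≤ k} :=
      measureReal_mono (Set.singleton_subset_iff.2 hrn)

lemma exp_neg_tailRate_le_binomial_real {r : ℝ} (hm : 1 ≤ p * (n : ℝ))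
    (hp : (p : ℝ) ≤ 1 / 22) (hr : 0 ≤ r) (hrn : p * (n : ℝ) + r ≤ n) :
    Real.exp (-(1296 * tailRate (p * (n : ℝ)) r + 2600)) ≤
      Bin(n, p).real {k | p * (n : ℝ) + r ≤ k} := by
  have hm₀ : 0 < p * (n : ℝ) := by linarith
  have hrate := tailRate_nonneg hm₀ hr
  rcases le_total (r + 5 * √(p * (n : ℝ))) ((n - p * n) / 2) with hsmall | hlarge
  · refine le_trans ?_
      (exp_neg_tailRate_add_sqrt_le_binomial_real hm (by linarith) hr hsmall)
    have hexp : Real.exp (-1) ≤ 3 / 4 := by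
      rw [Real.exp_neg, inv_le_comm₀ (Real.exp_pos 1) (by norm_num)]
      linarith [Real.add_one_le_exp 1]
    calc
      Real.exp (-(1296 * tailRate (p * (n : ℝ)) r + 2600))
          ≤ Real.exp (-(6 * tailRate (p * (n : ℝ)) (r + 5 * √(p * (n : ℝ)))) + -1) := by
        gcongr
        linarith [tailRate_add_sqrt_le hm₀ hr]
      _ = Real.exp (-(6 * tailRate (p * (n : ℝ)) (r + 5 * √(p * (n : ℝ))))) * Real.exp (-1) :=
        Real.exp_add _ _
      _ ≤ Real.exp (-(6 * tailRate (p * (n : ℝ)) (r + 5 * √(p * (n : ℝ))))) * (3 / 4) := by gcongr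
  · have hn : (0 : ℝ) < n := pos_of_mul_pos_right hm₀ p.2.1
    have hp₀ : 0 < p := Subtype.coe_lt_coe.1 (pos_of_mul_pos_left hm₀ hn.le)
    have hsqrt : √(p * (n : ℝ)) ≤ p * n := Real.sqrt_le_self_iff.2 (.inr hm)
    have hr' : n / 4 ≤ r := by nlinarith
    refine le_trans ?_
      (exp_neg_tailRate_le_binomial_real_of_le (Nat.cast_pos.1 hn) hp₀ hr' hrn)
    gcongr
    linarith

lemma IsBernoulli.eq_bernoulliMeasure {μ : Measure ℝ} (hμ : IsBernoulli μ p) :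
    μ = Ber(1, 0, p) := by
  obtain ⟨_, h₁, h₀⟩ := hμ
  have hpair : μ {1, 0} = 1 := by
    rw [Set.insert_eq, measure_union (by simp) (by simp), h₁, h₀,
      ← ENNReal.ofReal_add p.2.1 (sub_nonneg.2 p.2.2), add_sub_cancel, ENNReal.ofReal_one]
  have hsupp : μ.restrict {1, 0} = μ :=
    Measure.restrict_eq_self_of_ae_mem ((mem_ae_iff_prob_eq_one (by measurability)).2 hpair)
  rw [← hsupp, Set.insert_eq, Measure.restrict_union (by simp) (by simp),
    Measure.restrict_singleton, Measure.restrict_singleton, h₁, h₀,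
    ENNReal.ofReal_eq_coe_nnreal p.2.1, ENNReal.ofReal_eq_coe_nnreal (sub_nonneg.2 p.2.2)]
  rfl

lemma binomial_eq_map_ncard (n : ℕ) (p : I) :
    Bin(n, p) = setBer((Set.univ : Set (Fin n)), p).map Set.ncard :=
  Measure.ext_of_singleton fun k => by
    rw [binomial_singleton, map_ncard_setBernoulli_singleton Set.finite_univ, Set.ncard_univ,
      Nat.card_fin]

lemma pi_bernoulliMeasure_map_sum (n : ℕ) (p : I) :
    (Measure.pi fun _ : Fin n => Ber((1 : ℝ), 0, p)).map (fun x => ∑ i, x i) = Bin(ℝ, n, p) := by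
  classical
  let ind : Prop → ℝ := fun q => if q then 1 else 0
  have hBer : Ber((1 : ℝ), 0, p) = Ber(True, False, p).map ind := by
    simp [map_bernoulliMeasure, ind]
  have hset : setBer((Set.univ : Set (Fin n)), p)
      = (Measure.pi fun _ : Fin n => Ber(True, False, p)).map fun q => {i | q i} := by
    simp [setBernoulli_eq_map, Measure.infinitePi_eq_pi, bernoulliMeasure_def]
  rw [binomial_eq_map_ncard, hset, hBer, ← Measure.pi_map_pi fun _ => by fun_prop,
    Measure.map_map (by fun_prop) (by fun_prop), Measure.map_map (by fun_prop) (by fun_prop),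
    Measure.map_map (by fun_prop) (by fun_prop)]
  congr 1
  ext q
  simp [ind, Set.ncard_eq_toFinset_card']

lemma pi_isBernoulli_le_sum {μ : Measure ℝ} (hμ : IsBernoulli μ p) (y : ℝ) :
    (Measure.pi fun _ : Fin n => μ) {x | y ≤ ∑ i, x i} = Bin(n, p) {k | y ≤ k} := by
  calc
    (Measure.pi fun _ : Fin n => μ) {x | y ≤ ∑ i, x i}
        = (Measure.pi fun _ : Fin n => Ber((1 : ℝ), 0, p)).map (fun x => ∑ i, x i) (Set.Ici y) := by
      rw [hμ.eq_bernoulliMeasure, Measure.map_apply (by fun_prop) measurableSet_Ici]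
      rfl
    _ = Bin(n, p) {k | y ≤ k} := by
      rw [pi_bernoulliMeasure_map_sum, Measure.map_apply .of_discrete measurableSet_Ici]
      rfl

end Binomial

theorem binomial_tail_lower_bound :
    ∃ cb Cb : ℝ, 0 < cb ∧ 1 < Cb ∧
    ∃ N : ℕ, ∀ n : ℕ, N ≤ n →
      ∀ θ : ℝ, 1 / (cb * n) ≤ θ → θ ≤ cb →
      ∀ μ : Measure ℝ, IsBernoulli μ θ →
      ∀ r : ℝ, 0 ≤ r → r ≤ n - θ * n →
        ENNReal.ofReal (Cb⁻¹ * Real.exp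
            (-(Cb * Real.log (2 + (θ * n + r) / (θ * n)) * r ^ 2 / (θ * n + r)))) ≤
          (Measure.pi fun _ : Fin n => μ) {x | θ * n + r ≤ ∑ i, x i} := by
  refine ⟨1 / 22, Real.exp 2600, by norm_num, Real.one_lt_exp_iff.2 (by norm_num), 1, ?_⟩
  intro n hn θ hθ hθ' μ hμ r hr hrn
  have hn' : (0 : ℝ) < n := Nat.cast_pos.2 hn
  have hm : 22 ≤ θ * n := by
    rw [div_le_iff₀ (by positivity)] at hθ
    linarith
  lift θ to unitInterval using
    ⟨(pos_of_mul_pos_left (by linarith) hn'.le).le, hθ'.trans (by norm_num)⟩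
  have hCb : 1296 ≤ Real.exp 2600 := by linarith [Real.add_one_le_exp 2600]
  have hrate := tailRate_nonneg (show 0 < θ * (n : ℝ) by linarith) hr
  rw [pi_isBernoulli_le_sum hμ, ← ofReal_measureReal, mul_assoc (Real.exp 2600), mul_div_assoc]
  apply ENNReal.ofReal_le_ofReal
  calc
    (Real.exp 2600)⁻¹ * Real.exp (-(Real.exp 2600 * tailRate (θ * n) r))
        ≤ (Real.exp 2600)⁻¹ * Real.exp (-(1296 * tailRate (θ * n) r)) := by gcongr
    _ = Real.exp (-(1296 * tailRate (θ * n) r + 2600)) := by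
      rw [← Real.exp_neg, ← Real.exp_add, neg_add_rev]
    _ ≤ _ := exp_neg_tailRate_le_binomial_real (by linarith) hθ' hr (by linarith)
end

section
/- Let n ≥ 1, let μ_1,…,μ_{n+1} be Borel probability measures on ℝ, let A ⊆ ℝ^{n+1} be non-empty, and for α ∈ ℝ set A(α) := {v ∈ ℝ^n : (v,α) ∈ A}. Let X = (X_1,…,X_{n+1}) be distributed according to μ_1 × ⋯ × μ_{n+1} and let X' = (X_1,…,X_n). Fix κ > 0 and let h : ℝ → ℝ ∪ {−∞} be any function satisfying h(x) ≤ log( 1 / 𝔼_{X'} exp( κ·(dist^c(X', A(x)))² ) ) for all x ∈ ℝ. Define H(t,y) := min over λ ∈ [0,1] of ( −λ·h(t) − (1−λ)·h(y) + κ·(1−λ)²·(y−t)² ). Then 𝔼 exp( κ·(dist^c(X,A))² ) ≤ 𝔼 [ inf_{y ∈ ℝ} exp( H(X_{n+1}, y) ) ]. Moreover, H(t,y) = −h(y) + κ·(y−t)² if h(y) − h(t) ≥ 2κ·(y−t)²; H(t,y) = −h(t) − (h(y) − h(t))²/(4κ·(y−t)²) if 0 ≤ h(y) − h(t) ≤ 2κ·(y−t)²;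 and H(t,y) = −h(t) if h(y) − h(t) ≤ 0. -/
open MeasureTheory ENNReal

/-- The modified convex distance, valued in `ℝ≥0∞`:
`dist^c(x,A) = sup_{‖a‖₂ = 1} inf_{y ∈ A} ∑ i, a i * |x i - y i|`,
with the convention `dist^c(x,∅) = +∞`. -/
noncomputable def distcE {n : ℕ} (x : Fin n → ℝ) (A : Set (Fin n → ℝ)) : ℝ≥0∞ :=
  ⨆ a : {a : Fin n → ℝ // euclNorm a = 1},
    ⨅ y : A, ENNReal.ofReal (∑ i, a.1 i * |x i - (y : Fin n → ℝ) i|)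

/-- Extension of `x ↦ exp x` to `ℝ≥0∞`, sending `∞` to `∞`. -/
noncomputable def eexp (x : ℝ≥0∞) : ℝ≥0∞ :=
  if x = ⊤ then ⊤ else ENNReal.ofReal (Real.exp x.toReal)

/-- Extension of `x ↦ exp x` to `EReal`, sending `⊥` to `0` and `⊤` to `∞`. -/
noncomputable def eexpE (x : EReal) : ℝ≥0∞ :=
  if x = ⊤ then ⊤ else if x = ⊥ then 0 else ENNReal.ofReal (Real.exp x.toReal)

/-- Extension of the logarithm to `ℝ≥0∞`, valued in `EReal`. -/
noncomputable def elog (x : ℝ≥0∞) : EReal :=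
  if x = 0 then ⊥ else if x = ⊤ then ⊤ else ((Real.log x.toReal : ℝ) : EReal)

/-- `H(t,y) = min_{λ ∈ [0,1]} ( -λ·h(t) - (1-λ)·h(y) + κ·(1-λ)²·(y-t)² )`, computed in
the extended reals to allow `h` to take the value `-∞`. -/
noncomputable def Hfun (κ : ℝ) (h : ℝ → EReal) (t y : ℝ) : EReal :=
  ⨅ l : Set.Icc (0 : ℝ) 1,
    (-(((l : ℝ) : EReal) * h t) - (((1 - (l : ℝ)) : ℝ) : EReal) * h y +
      ((κ * (1 - (l : ℝ)) ^ 2 * (y - t) ^ 2 : ℝ) : EReal))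

/-!
Freeze the first `n` coordinates `v` and the last coordinate `t`. For a unit weight `a`, competitors
in `A` may be taken from the section of `A` over `t` itself or over any other `y`; mixing the two
resulting bounds with weights `l` and `1 - l` and applying Cauchy-Schwarz to the splitting of `a`
into its first `n` coordinates and its last one gives
`dist^c((v,t),A)² ≤ l dist^c(v,A(t))² + (1 - l) dist^c(v,A(y))² + (1 - l)² (y - t)²`.
Exponentiating, integrating over `v` with Hölder's inequality for the exponents `l` and `1 - l`, and
minimising over `l` bounds the inner integral by `exp (H(t,y))`.
-/

section EuclNorm

variable {n : ℕ}

lemma euclNorm_eq_norm (a : Fin n → ℝ) : euclNorm a = ‖WithLp.toLp 2 a‖ := by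
  simp [euclNorm, EuclideanSpace.norm_eq]

lemma euclNorm_nonneg (a : Fin n → ℝ) : 0 ≤ euclNorm a :=
  Real.sqrt_nonneg _

lemma euclNorm_sq (a : Fin n → ℝ) : euclNorm a ^ 2 = ∑ i, a i ^ 2 :=
  Real.sq_sqrt (Finset.sum_nonneg fun _ _ => sq_nonneg _)

lemma euclNorm_pos {a : Fin n → ℝ} (ha : a ≠ 0) : 0 < euclNorm a := by
  rw [euclNorm_eq_norm, norm_pos_iff]
  simpa using ha

lemma euclNorm_inv_smul_self {a : Fin n → ℝ} (ha : a ≠ 0) :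
    euclNorm ((euclNorm a)⁻¹ • a) = 1 := by
  rw [euclNorm_eq_norm, WithLp.toLp_smul, norm_smul, norm_inv, Real.norm_eq_abs,
    abs_of_nonneg (euclNorm_nonneg a), ← euclNorm_eq_norm, inv_mul_cancel₀ (euclNorm_pos ha).ne']

lemma abs_apply_le_euclNorm (a : Fin n → ℝ) (i : Fin n) : |a i| ≤ euclNorm a :=
  euclNorm_eq_norm a ▸ PiLp.norm_apply_le (WithLp.toLp 2 a) i

lemma euclNorm_single (i : Fin n) : euclNorm (Pi.single i 1) = 1 := by
  simp [euclNorm, Pi.single_apply]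

lemma euclNorm_init_sq_add_last_sq (a : Fin (n + 1) → ℝ) :
    euclNorm (Fin.init a) ^ 2 + a (Fin.last n) ^ 2 = euclNorm a ^ 2 := by
  simp only [euclNorm_sq, Fin.sum_univ_castSucc, Fin.init]

end EuclNorm

section WeightedDist

variable {n : ℕ}

/-- The distance from `x` to `A` for a fixed, not necessarily normalised, weight `a`; the convex
distance `distcE` is its supremum over unit weights. -/
noncomputable def weightedDist (a x : Fin n → ℝ) (A : Set (Fin n → ℝ)) : ℝ≥0∞ :=
  ⨅ y : A, ENNReal.ofReal (∑ i, a i * |x i - (y : Fin n → ℝ) i|)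

lemma weightedDist_le {a x y : Fin n → ℝ} {A : Set (Fin n → ℝ)} (hy : y ∈ A) :
    weightedDist a x A ≤ ENNReal.ofReal (∑ i, a i * |x i - y i|) :=
  iInf_le (fun y : A => ENNReal.ofReal (∑ i, a i * |x i - (y : Fin n → ℝ) i|)) ⟨y, hy⟩

lemma weightedDist_le_distcE {a : Fin n → ℝ} (ha : euclNorm a = 1) (x : Fin n → ℝ)
    (A : Set (Fin n → ℝ)) : weightedDist a x A ≤ distcE x A :=
  le_iSup (fun a : {a : Fin n → ℝ // euclNorm a = 1} => weightedDist a.1 x A) ⟨a, ha⟩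

lemma distcE_le_iff {x : Fin n → ℝ} {A : Set (Fin n → ℝ)} {d : ℝ≥0∞} :
    distcE x A ≤ d ↔ ∀ a, euclNorm a = 1 → weightedDist a x A ≤ d :=
  iSup_le_iff.trans Subtype.forall

lemma weightedDist_empty (a x : Fin n → ℝ) : weightedDist a x ∅ = ⊤ :=
  iInf_of_empty _

lemma weightedDist_zero (x : Fin n → ℝ) {A : Set (Fin n → ℝ)} (hA : A.Nonempty) :
    weightedDist 0 x A = 0 := by
  obtain ⟨y, hy⟩ := hA
  simpa using weightedDist_le (a := 0) (x := x) hy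

lemma weightedDist_smul {c : ℝ} (hc : 0 < c) (a x : Fin n → ℝ) (A : Set (Fin n → ℝ)) :
    weightedDist (c • a) x A = ENNReal.ofReal c * weightedDist a x A := by
  rw [weightedDist, weightedDist,
    ENNReal.mul_iInf_of_ne (ENNReal.ofReal_pos.2 hc).ne' ENNReal.ofReal_ne_top]
  simp only [← ENNReal.ofReal_mul hc.le, Finset.mul_sum, Pi.smul_apply, smul_eq_mul, mul_assoc]

lemma distcE_empty (hn : 1 ≤ n) (x : Fin n → ℝ) : distcE x ∅ = ⊤ :=
  top_le_iff.1 <| weightedDist_empty _ x ▸ weightedDist_le_distcE (euclNorm_single ⟨0, hn⟩) x ∅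

lemma weightedDist_le_euclNorm_mul_distcE (a x : Fin n → ℝ) {A : Set (Fin n → ℝ)}
    (hA : A.Nonempty) : weightedDist a x A ≤ ENNReal.ofReal (euclNorm a) * distcE x A := by
  rcases eq_or_ne a 0 with rfl | ha
  · simp [weightedDist_zero x hA]
  · calc weightedDist a x A
        = weightedDist (euclNorm a • (euclNorm a)⁻¹ • a) x A := by
          rw [smul_inv_smul₀ (euclNorm_pos ha).ne']
      _ = ENNReal.ofReal (euclNorm a) * weightedDist ((euclNorm a)⁻¹ • a) x A :=
          weightedDist_smul (euclNorm_pos ha) _ x A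
      _ ≤ ENNReal.ofReal (euclNorm a) * distcE x A := by
          gcongr
          exact weightedDist_le_distcE (euclNorm_inv_smul_self ha) x A

/-- The factor `l` absorbs the case of an empty `A`, where `weightedDist` is infinite even if
`a = 0`. -/
lemma mul_weightedDist_le {l : ℝ≥0∞} (hn : 1 ≤ n) (a x : Fin n → ℝ) {A : Set (Fin n → ℝ)}
    (hl : l * distcE x A ≠ ⊤) :
    l * weightedDist a x A ≤ ENNReal.ofReal (euclNorm a) * (l * distcE x A) := by
  rcases A.eq_empty_or_nonempty with rfl | hA
  · have hl0 : l = 0 := by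
      by_contra h0
      exact hl (by rw [distcE_empty hn, ENNReal.mul_top h0])
    simp [hl0]
  · grw [weightedDist_le_euclNorm_mul_distcE a x hA]
    exact (mul_left_comm _ _ _).le

lemma weightedDist_le_add_sum_edist (a x z : Fin n → ℝ) (A : Set (Fin n → ℝ)) :
    weightedDist a x A ≤ weightedDist a z A + ∑ i, ‖a i‖ₑ * edist (x i) (z i) := by
  have hsum : ∑ i, ‖a i‖ₑ * edist (x i) (z i) = ENNReal.ofReal (∑ i, |a i| * |x i - z i|) := by
    rw [ENNReal.ofReal_sum_of_nonneg fun i _ => by positivity]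
    simp only [ENNReal.ofReal_mul (abs_nonneg _), Real.enorm_eq_ofReal_abs, edist_dist,
      Real.dist_eq]
  rw [hsum]
  conv_rhs => rw [weightedDist, ENNReal.iInf_add]
  refine le_iInf fun y => (weightedDist_le y.2).trans ?_
  refine (ENNReal.ofReal_le_ofReal ?_).trans ENNReal.ofReal_add_le
  rw [← Finset.sum_add_distrib]
  refine Finset.sum_le_sum fun i _ => ?_
  have htri : |(|x i - y.1 i| - |z i - y.1 i|)| ≤ |x i - z i| := by
    simpa using abs_abs_sub_abs_le (x i - y.1 i) (z i - y.1 i)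
  calc a i * |x i - y.1 i|
      = a i * |z i - y.1 i| + a i * (|x i - y.1 i| - |z i - y.1 i|) := by ring
    _ ≤ a i * |z i - y.1 i| + |a i * (|x i - y.1 i| - |z i - y.1 i|)| := by
        gcongr
        exact le_abs_self _
    _ ≤ a i * |z i - y.1 i| + |a i| * |x i - z i| := by
        rw [abs_mul]
        gcongr

lemma continuous_distcE (A : Set (Fin n → ℝ)) : Continuous fun x => distcE x A := by
  refine continuous_of_le_add_edist n (ENNReal.natCast_ne_top n) fun x z => ?_
  refine distcE_le_iff.2 fun a ha => (weightedDist_le_add_sum_edist a x z A).trans ?_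
  have hsum : ∑ i, ‖a i‖ₑ * edist (x i) (z i) ≤ ∑ _i : Fin n, edist x z := by
    gcongr with i
    calc ‖a i‖ₑ * edist (x i) (z i) ≤ 1 * edist x z := by
          gcongr
          · rw [Real.enorm_eq_ofReal_abs, ENNReal.ofReal_le_one, ← ha]
            exact abs_apply_le_euclNorm a i
          · exact edist_le_pi_edist x z i
      _ = edist x z := one_mul _
  calc weightedDist a z A + ∑ i, ‖a i‖ₑ * edist (x i) (z i)
      ≤ distcE z A + ∑ _i : Fin n, edist x z := by
        gcongr
        exact weightedDist_le_distcE ha z A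
    _ = distcE z A + n * edist x z := by simp

end WeightedDist

lemma ennreal_mul_add_mul_sq_le (r s p q : ℝ≥0∞) :
    (r * p + s * q) ^ 2 ≤ (r ^ 2 + s ^ 2) * (p ^ 2 + q ^ 2) := by
  have hcs := ENNReal.inner_le_Lp_mul_Lq Finset.univ ![r, s] ![p, q] Real.HolderConjugate.two_two
  simp only [Fin.sum_univ_two, Matrix.cons_val_zero, Matrix.cons_val_one, one_div,
    ENNReal.rpow_two] at hcs
  rwa [← ENNReal.mul_rpow_of_nonneg _ _ (by norm_num), ENNReal.le_rpow_inv_iff two_pos,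
    ENNReal.rpow_two] at hcs

section Sections

variable {n : ℕ}

/-- The section `A(x) = {u : (u,x) ∈ A}` of `A` over the value `x` of the last coordinate. -/
def lastSection (A : Set (Fin (n + 1) → ℝ)) (x : ℝ) : Set (Fin n → ℝ) :=
  {u : Fin n → ℝ | Fin.snoc u x ∈ A}

lemma weightedDist_snoc_le_init (a : Fin (n + 1) → ℝ) (v : Fin n → ℝ) (x : ℝ)
    (A : Set (Fin (n + 1) → ℝ)) :
    weightedDist a (Fin.snoc v x) A ≤ weightedDist (Fin.init a) v (lastSection A x) := by
  refine le_iInf fun u => ?_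
  have hu : Fin.snoc u.1 x ∈ A := u.2
  refine (weightedDist_le hu).trans_eq ?_
  simp [Fin.sum_univ_castSucc, Fin.init]

lemma weightedDist_snoc_le (a : Fin (n + 1) → ℝ) (v : Fin n → ℝ) (t x : ℝ)
    (A : Set (Fin (n + 1) → ℝ)) :
    weightedDist a (Fin.snoc v t) A ≤
      weightedDist (Fin.init a) v (lastSection A x) + ‖a (Fin.last n)‖ₑ * edist t x := by
  refine (weightedDist_le_add_sum_edist a _ (Fin.snoc v x) A).trans ?_
  rw [Fin.sum_univ_castSucc]
  simpa using add_le_add_left (weightedDist_snoc_le_init a v x A) _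

lemma distcE_snoc_sq_le_sq_add_sq (hn : 1 ≤ n) (v : Fin n → ℝ) (t y : ℝ)
    (A : Set (Fin (n + 1) → ℝ)) {l m : ℝ≥0∞} (hlm : l + m = 1) :
    distcE (Fin.snoc v t) A ^ 2 ≤
      (l * distcE v (lastSection A t) + m * distcE v (lastSection A y)) ^ 2 +
        (m * edist t y) ^ 2 := by
  set dt := distcE v (lastSection A t)
  set dy := distcE v (lastSection A y)
  rcases eq_or_ne (l * dt) ⊤ with ht | ht
  · simp [ht]
  rcases eq_or_ne (m * dy) ⊤ with hy | hy
  · simp [hy]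
  suffices hdist : distcE (Fin.snoc v t) A ≤
      ((l * dt + m * dy) ^ 2 + (m * edist t y) ^ 2) ^ (2⁻¹ : ℝ) by
    rwa [ENNReal.le_rpow_inv_iff two_pos, ENNReal.rpow_two] at hdist
  refine distcE_le_iff.2 fun a ha => ?_
  rw [ENNReal.le_rpow_inv_iff two_pos, ENNReal.rpow_two]
  set B := weightedDist a (Fin.snoc v t) A
  have hmix : B ≤ ENNReal.ofReal (euclNorm (Fin.init a)) * (l * dt + m * dy) +
      ‖a (Fin.last n)‖ₑ * (m * edist t y) := by
    calc B = l * B + m * B := by rw [← add_mul, hlm, one_mul]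
      _ ≤ l * weightedDist (Fin.init a) v (lastSection A t) +
          m * (weightedDist (Fin.init a) v (lastSection A y) +
            ‖a (Fin.last n)‖ₑ * edist t y) := by
          gcongr
          · exact weightedDist_snoc_le_init a v t A
          · exact weightedDist_snoc_le a v t y A
      _ ≤ ENNReal.ofReal (euclNorm (Fin.init a)) * (l * dt) +
          (ENNReal.ofReal (euclNorm (Fin.init a)) * (m * dy) +
            m * (‖a (Fin.last n)‖ₑ * edist t y)) := by
          rw [mul_add m]
          exact add_le_add (mul_weightedDist_le hn _ v ht)
            (add_le_add_left (mul_weightedDist_le hn _ v hy) _)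
      _ = _ := by ring
  have hunit : ENNReal.ofReal (euclNorm (Fin.init a)) ^ 2 + ‖a (Fin.last n)‖ₑ ^ 2 = 1 := by
    rw [Real.enorm_eq_ofReal_abs, ← ENNReal.ofReal_pow (euclNorm_nonneg _),
      ← ENNReal.ofReal_pow (abs_nonneg _), ← ENNReal.ofReal_add (by positivity) (by positivity),
      sq_abs, euclNorm_init_sq_add_last_sq, ha, one_pow, ENNReal.ofReal_one]
  grw [hmix, ennreal_mul_add_mul_sq_le, hunit, one_mul]

lemma distcE_snoc_sq_le (hn : 1 ≤ n) (v : Fin n → ℝ) (t y : ℝ)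
    (A : Set (Fin (n + 1) → ℝ)) {l m : ℝ≥0∞} (hlm : l + m = 1) :
    distcE (Fin.snoc v t) A ^ 2 ≤
      l * distcE v (lastSection A t) ^ 2 + m * distcE v (lastSection A y) ^ 2 +
        (m * edist t y) ^ 2 := by
  refine (distcE_snoc_sq_le_sq_add_sq hn v t y A hlm).trans ?_
  gcongr
  simpa only [ENNReal.rpow_two] using
    ENNReal.rpow_arith_mean_le_arith_mean2_rpow l m _ _ hlm one_le_two

end Sections

section ExtendedExp

lemma eexp_eq_exp (x : ℝ≥0∞) : eexp x = EReal.exp x := by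
  rw [eexp]
  split_ifs with hx
  · simp [hx]
  · lift x to NNReal using hx
    rfl

lemma eexpE_eq_exp (x : EReal) : eexpE x = EReal.exp x := by
  induction x <;> simp [eexpE]

lemma elog_eq_log (x : ℝ≥0∞) : elog x = ENNReal.log x :=
  rfl

lemma eexp_mono : Monotone eexp := fun x y hxy => by
  rw [eexp_eq_exp, eexp_eq_exp, EReal.exp_le_exp_iff, EReal.coe_ennreal_le_coe_ennreal_iff]
  exact hxy

lemma measurable_eexp : Measurable eexp := by
  rw [funext eexp_eq_exp]
  exact EReal.measurable_exp.comp measurable_coe_ennreal_ereal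

lemma eexp_add (x y : ℝ≥0∞) : eexp (x + y) = eexp x * eexp y := by
  simp only [eexp_eq_exp, EReal.coe_ennreal_add, EReal.exp_add]

lemma eexp_ofReal_mul {l : ℝ} (hl : 0 ≤ l) (x : ℝ≥0∞) :
    eexp (ENNReal.ofReal l * x) = eexp x ^ l := by
  rw [eexp_eq_exp, eexp_eq_exp, ← EReal.exp_mul, EReal.coe_ennreal_mul,
    EReal.coe_ennreal_ofReal, max_eq_left hl, mul_comm]

lemma eexp_ofReal {x : ℝ} (hx : 0 ≤ x) :
    eexp (ENNReal.ofReal x) = ENNReal.ofReal (Real.exp x) := by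
  rw [eexp_eq_exp, EReal.coe_ennreal_ofReal, max_eq_left hx, EReal.exp_coe]

end ExtendedExp

section ConvexDistanceMoment

variable {n : ℕ}

lemma measurable_eexp_mul_distcE_sq (K : ℝ≥0∞) (A : Set (Fin n → ℝ)) :
    Measurable fun x => eexp (K * distcE x A ^ 2) :=
  measurable_eexp.comp (((continuous_distcE A).measurable.pow_const 2).const_mul K)

lemma eexp_mul_distcE_snoc_sq_le (hn : 1 ≤ n) (v : Fin n → ℝ) (t y : ℝ)
    (A : Set (Fin (n + 1) → ℝ)) {κ : ℝ} (hκ : 0 ≤ κ) {l : ℝ} (hl : l ∈ Set.Icc (0 : ℝ) 1) :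
    eexp (ENNReal.ofReal κ * distcE (Fin.snoc v t) A ^ 2) ≤
      eexp (ENNReal.ofReal κ * distcE v (lastSection A t) ^ 2) ^ l *
        eexp (ENNReal.ofReal κ * distcE v (lastSection A y) ^ 2) ^ (1 - l) *
        ENNReal.ofReal (Real.exp (κ * (1 - l) ^ 2 * (y - t) ^ 2)) := by
  obtain ⟨hl0, hl1⟩ := hl
  have hm0 : 0 ≤ 1 - l := sub_nonneg.2 hl1
  have hlm : ENNReal.ofReal l + ENNReal.ofReal (1 - l) = 1 := by
    rw [← ENNReal.ofReal_add hl0 hm0, add_sub_cancel, ENNReal.ofReal_one]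
  have hshift : ENNReal.ofReal κ * (ENNReal.ofReal (1 - l) * edist t y) ^ 2 =
      ENNReal.ofReal (κ * (1 - l) ^ 2 * (y - t) ^ 2) := by
    rw [edist_comm, edist_dist, ← ENNReal.ofReal_mul hm0, ← ENNReal.ofReal_pow (by positivity),
      ← ENNReal.ofReal_mul hκ, mul_pow, Real.dist_eq, sq_abs, mul_assoc]
  rw [← eexp_ofReal (by positivity), ← eexp_ofReal_mul hl0, ← eexp_ofReal_mul hm0, ← eexp_add,
    ← eexp_add, ← hshift]
  refine eexp_mono ?_
  grw [distcE_snoc_sq_le hn v t y A hlm]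
  exact le_of_eq (by ring)

lemma lintegral_eexp_mul_distcE_snoc_sq_le (hn : 1 ≤ n) (ν : Measure (Fin n → ℝ))
    (t y : ℝ) (A : Set (Fin (n + 1) → ℝ)) {κ : ℝ} (hκ : 0 ≤ κ) {l : ℝ}
    (hl : l ∈ Set.Icc (0 : ℝ) 1) :
    ∫⁻ v, eexp (ENNReal.ofReal κ * distcE (Fin.snoc v t) A ^ 2) ∂ν ≤
      (∫⁻ v, eexp (ENNReal.ofReal κ * distcE v (lastSection A t) ^ 2) ∂ν) ^ l *
        (∫⁻ v, eexp (ENNReal.ofReal κ * distcE v (lastSection A y) ^ 2) ∂ν) ^ (1 - l) *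
        ENNReal.ofReal (Real.exp (κ * (1 - l) ^ 2 * (y - t) ^ 2)) := by
  refine (lintegral_mono fun v => eexp_mul_distcE_snoc_sq_le hn v t y A hκ hl).trans ?_
  rw [lintegral_mul_const' _ _ ENNReal.ofReal_ne_top]
  gcongr
  exact ENNReal.lintegral_mul_norm_pow_le
    (measurable_eexp_mul_distcE_sq _ (lastSection A t)).aemeasurable
    (measurable_eexp_mul_distcE_sq _ (lastSection A y)).aemeasurable
    hl.1 (sub_nonneg.2 hl.2) (add_sub_cancel l 1)

lemma lintegral_eexp_mul_distcE_snoc_sq_le_eexpE_Hfun (hn : 1 ≤ n)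
    (ν : Measure (Fin n → ℝ)) (A : Set (Fin (n + 1) → ℝ)) {κ : ℝ} (hκ : 0 ≤ κ) {h : ℝ → EReal}
    (hh : ∀ x, h x ≤
      -elog (∫⁻ v, eexp (ENNReal.ofReal κ * distcE v (lastSection A x) ^ 2) ∂ν)) (t y : ℝ) :
    ∫⁻ v, eexp (ENNReal.ofReal κ * distcE (Fin.snoc v t) A ^ 2) ∂ν ≤
      eexpE (Hfun κ h t y) := by
  rw [eexpE_eq_exp, ← ENNReal.exp_log (∫⁻ v, _ ∂ν), EReal.exp_le_exp_iff]
  refine le_iInf fun ⟨l, hl⟩ => ?_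
  have hlog (x : ℝ) {p : ℝ} (hp : 0 ≤ p) :
      (p : EReal) * ENNReal.log
        (∫⁻ v, eexp (ENNReal.ofReal κ * distcE v (lastSection A x) ^ 2) ∂ν) ≤
        -((p : EReal) * h x) := by
    rw [← elog_eq_log, ← mul_neg]
    exact mul_le_mul_of_nonneg_left (EReal.le_neg_of_le_neg (hh x)) (EReal.coe_nonneg.2 hp)
  refine (ENNReal.log_le_log
    (lintegral_eexp_mul_distcE_snoc_sq_le hn ν t y A hκ hl)).trans ?_
  rw [ENNReal.log_mul_add, ENNReal.log_mul_add, ENNReal.log_rpow, ENNReal.log_rpow,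
    ENNReal.log_ofReal_of_pos (Real.exp_pos _), Real.log_exp,
    sub_eq_add_neg (-((l : EReal) * h t))]
  exact add_le_add (add_le_add (hlog t hl.1) (hlog y (sub_nonneg.2 hl.2))) le_rfl

end ConvexDistanceMoment

section ProductMeasure

lemma lintegral_pi_le_lintegral_lintegral_snoc {n : ℕ} {α : Type*} [MeasurableSpace α]
    (μ : Fin (n + 1) → Measure α) [∀ i, SigmaFinite (μ i)] (f : (Fin (n + 1) → α) → ℝ≥0∞) :
    ∫⁻ x, f x ∂(Measure.pi μ) ≤
      ∫⁻ t, ∫⁻ v, f (Fin.snoc v t) ∂(Measure.pi fun i : Fin n => μ i.castSucc)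
        ∂(μ (Fin.last n)) := by
  have hsplit := (measurePreserving_piFinSuccAbove μ (Fin.last n)).symm
  rw [← hsplit.lintegral_comp_emb (MeasurableEquiv.measurableEmbedding _)]
  simp only [Fin.succAbove_last, MeasurableEquiv.piFinSuccAbove_symm_apply, Fin.insertNthEquiv,
    Equiv.coe_fn_mk, Fin.insertNth_last']
  exact lintegral_prod_le _

/-- Only an inequality, since `f` need not be measurable: in the application it is an infimum over
uncountably many `y`. -/
lemma lintegral_le_lintegral_pi_eval {ι : Type*} [Fintype ι] {X : ι → Type*}
    [∀ i, MeasurableSpace (X i)] (μ : ∀ i, Measure (X i)) [∀ i, IsProbabilityMeasure (μ i)]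
    (i : ι) (f : X i → ℝ≥0∞) : ∫⁻ t, f t ∂(μ i) ≤ ∫⁻ x, f (x i) ∂(Measure.pi μ) := by
  rw [← (measurePreserving_eval μ i).map_eq]
  exact lintegral_map_le f _

end ProductMeasure

section InterpCost

/-- The quadratic minimised over `l ∈ [0,1]` in the definition of `H`, for finite values `a = h(t)`,
`b = h(y)` and `s = κ (y - t)²`. -/
def interpCost (a b s l : ℝ) : ℝ :=
  -(l * a) - (1 - l) * b + s * (1 - l) ^ 2

variable {a b s : ℝ}

lemma isLeast_interpCost_of_two_mul_le_sub (hs : 0 ≤ s) (hab : 2 * s ≤ b - a) :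
    IsLeast (interpCost a b s '' Set.Icc 0 1) (-b + s) := by
  refine ⟨⟨0, by simp, by simp [interpCost]⟩, ?_⟩
  rintro _ ⟨l, ⟨hl0, -⟩, rfl⟩
  rw [interpCost]
  nlinarith [mul_le_mul_of_nonneg_left hab hl0, mul_nonneg hs (sq_nonneg l)]

/-- For `s = 0` the hypotheses force `a = b`, and the junk value `0 / 0 = 0` makes the formula
correct. -/
lemma isLeast_interpCost_of_sub_le_two_mul (hab : 0 ≤ b - a) (hs : b - a ≤ 2 * s) :
    IsLeast (interpCost a b s '' Set.Icc 0 1) (-a - (b - a) ^ 2 / (4 * s)) := by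
  rcases (show 0 ≤ s by linarith).eq_or_lt with rfl | hs0
  · obtain rfl : b = a := by linarith
    refine ⟨⟨1, by simp, by simp [interpCost]⟩, ?_⟩
    rintro _ ⟨l, -, rfl⟩
    rw [interpCost]
    exact le_of_eq (by ring)
  · have hsq (l : ℝ) : interpCost a b s l =
        -a - (b - a) ^ 2 / (4 * s) + s * (1 - l - (b - a) / (2 * s)) ^ 2 := by
      rw [interpCost]
      field_simp
      ring
    refine ⟨⟨1 - (b - a) / (2 * s), ⟨?_, ?_⟩, by simp [hsq]⟩, ?_⟩
    · exact sub_nonneg.2 (div_le_one_of_le₀ hs (by positivity))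
    · exact sub_le_self _ (by positivity)
    · rintro _ ⟨l, -, rfl⟩
      rw [hsq]
      exact le_add_of_nonneg_right (by positivity)

lemma isLeast_interpCost_of_sub_nonpos (hs : 0 ≤ s) (hab : b - a ≤ 0) :
    IsLeast (interpCost a b s '' Set.Icc 0 1) (-a) := by
  refine ⟨⟨1, by simp, by simp [interpCost]⟩, ?_⟩
  rintro _ ⟨l, ⟨-, hl1⟩, rfl⟩
  rw [interpCost]
  nlinarith [mul_nonneg hs (sq_nonneg (1 - l)), mul_nonneg (sub_nonneg.2 hl1) (neg_nonneg.2 hab)]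

end InterpCost

lemma ereal_coe_mul_ne_top {p : ℝ} (hp : 0 ≤ p) {x : EReal} (hx : x ≠ ⊤) :
    (p : EReal) * x ≠ ⊤ := by
  simp [EReal.mul_eq_top, hx, hp.not_gt]

section Hfun

variable {κ : ℝ} {h : ℝ → EReal} {t y : ℝ}

lemma Hfun_le {l : ℝ} (hl : l ∈ Set.Icc (0 : ℝ) 1) :
    Hfun κ h t y ≤ -((l : EReal) * h t) - ((1 - l : ℝ) : EReal) * h y +
      ((κ * (1 - l) ^ 2 * (y - t) ^ 2 : ℝ) : EReal) :=
  iInf_le (fun l : Set.Icc (0 : ℝ) 1 => -(((l : ℝ) : EReal) * h t) -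
    (((1 - (l : ℝ)) : ℝ) : EReal) * h y +
      ((κ * (1 - (l : ℝ)) ^ 2 * (y - t) ^ 2 : ℝ) : EReal)) ⟨l, hl⟩

lemma Hfun_le_neg_right : Hfun κ h t y ≤ -h y + ((κ * (y - t) ^ 2 : ℝ) : EReal) := by
  simpa using Hfun_le (κ := κ) (h := h) (t := t) (y := y) (l := 0) (by simp)

lemma Hfun_le_neg_left : Hfun κ h t y ≤ -h t := by
  simpa using Hfun_le (κ := κ) (h := h) (t := t) (y := y) (l := 1) (by simp)

lemma Hfun_eq_coe_of_isLeast {a b c : ℝ} (ha : h t = a) (hb : h y = b)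
    (hc : IsLeast (interpCost a b (κ * (y - t) ^ 2) '' Set.Icc 0 1) c) :
    Hfun κ h t y = c := by
  have hcost (l : ℝ) : -((l : EReal) * h t) - ((1 - l : ℝ) : EReal) * h y +
      ((κ * (1 - l) ^ 2 * (y - t) ^ 2 : ℝ) : EReal) = interpCost a b (κ * (y - t) ^ 2) l := by
    rw [ha, hb, interpCost, mul_right_comm κ]
    norm_cast
  obtain ⟨⟨l, hl, rfl⟩, hmin⟩ := hc
  refine le_antisymm ((Hfun_le hl).trans_eq (hcost l)) (le_iInf fun m => ?_)
  rw [hcost]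
  exact EReal.coe_le_coe_iff.2 (hmin ⟨m, m.2, rfl⟩)

lemma Hfun_of_left_eq_bot (ht : h t = ⊥) :
    Hfun κ h t y = -h y + ((κ * (y - t) ^ 2 : ℝ) : EReal) := by
  refine le_antisymm Hfun_le_neg_right (le_iInf fun ⟨l, hl0, hl1⟩ => ?_)
  dsimp only
  rcases eq_or_ne (h y) ⊤ with hy | hy
  · simp [hy]
  rcases hl0.eq_or_lt with rfl | hl0
  · simp
  · rw [ht, EReal.coe_mul_bot_of_pos hl0, EReal.neg_bot, EReal.top_sub
      (ereal_coe_mul_ne_top (sub_nonneg.2 hl1) hy), EReal.top_add_coe]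
    exact le_top

lemma Hfun_of_right_eq_bot (hy : h y = ⊥) : Hfun κ h t y = -h t := by
  refine le_antisymm Hfun_le_neg_left (le_iInf fun ⟨l, hl0, hl1⟩ => ?_)
  dsimp only
  rcases eq_or_ne (h t) ⊤ with ht | ht
  · simp [ht]
  rcases hl1.eq_or_lt with rfl | hl1
  · simp
  · have hne : -((l : EReal) * h t) ≠ ⊥ :=
      EReal.neg_eq_bot_iff.not.2 (ereal_coe_mul_ne_top hl0 ht)
    rw [hy, EReal.coe_mul_bot_of_pos (sub_pos.2 hl1), EReal.sub_bot hne, EReal.top_add_coe]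
    exact le_top

lemma Hfun_eq_of_two_mul_le_sub (hκ : 0 ≤ κ)
    (hle : ((2 * κ * (y - t) ^ 2 : ℝ) : EReal) ≤ h y - h t) :
    Hfun κ h t y = -h y + ((κ * (y - t) ^ 2 : ℝ) : EReal) := by
  induction ht : h t with
  | bot => exact Hfun_of_left_eq_bot ht
  | top => simp [ht, -EReal.coe_mul] at hle
  | coe a =>
    induction hy : h y with
    | bot => simp [hy, -EReal.coe_mul] at hle
    | top => simpa [hy] using Hfun_le_neg_right (κ := κ) (h := h) (t := t) (y := y)
    | coe b =>
      rw [ht, hy] at hle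
      have hab : 2 * (κ * (y - t) ^ 2) ≤ b - a := by rw [← mul_assoc]; exact_mod_cast hle
      rw [Hfun_eq_coe_of_isLeast ht hy
        (isLeast_interpCost_of_two_mul_le_sub (by positivity) hab)]
      norm_cast

lemma Hfun_eq_of_sub_le_two_mul {a b : ℝ} (ha : h t = a) (hb : h y = b) (hab : 0 ≤ b - a)
    (hle : b - a ≤ 2 * κ * (y - t) ^ 2) :
    Hfun κ h t y = ((-a - (b - a) ^ 2 / (4 * κ * (y - t) ^ 2) : ℝ) : EReal) := by
  rw [mul_assoc] at hle ⊢
  exact Hfun_eq_coe_of_isLeast ha hb (isLeast_interpCost_of_sub_le_two_mul hab hle)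

lemma Hfun_eq_of_sub_nonpos (hκ : 0 ≤ κ) (hle : h y - h t ≤ 0) : Hfun κ h t y = -h t := by
  induction hy : h y with
  | bot => exact Hfun_of_right_eq_bot hy
  | top =>
    induction ht : h t with
    | top => simpa [ht] using Hfun_le_neg_left (κ := κ) (h := h) (t := t) (y := y)
    | _ => simp [ht, hy] at hle
  | coe b =>
    induction ht : h t with
    | bot => simp [ht, hy] at hle
    | top => simpa [ht] using Hfun_le_neg_left (κ := κ) (h := h) (t := t) (y := y)
    | coe a =>
      rw [ht, hy] at hle
      have hab : b - a ≤ 0 := by exact_mod_cast hle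
      rw [Hfun_eq_coe_of_isLeast ht hy (isLeast_interpCost_of_sub_nonpos (by positivity) hab)]
      norm_cast

end Hfun

theorem induction_step_with_H_general {n : ℕ} (hn : 1 ≤ n) (ν : Measure (Fin n → ℝ))
    (μ : Measure ℝ) (A : Set (Fin (n + 1) → ℝ)) {κ : ℝ} (hκ : 0 < κ) (h : ℝ → EReal)
    (hh : ∀ x, h x ≤
      -elog (∫⁻ v, eexp (ENNReal.ofReal κ * distcE v (lastSection A x) ^ 2) ∂ν)) :
    (∫⁻ t, ∫⁻ v, eexp (ENNReal.ofReal κ * distcE (Fin.snoc v t) A ^ 2) ∂ν ∂μ ≤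
      ∫⁻ t, ⨅ y : ℝ, eexpE (Hfun κ h t y) ∂μ) ∧
    (∀ t y : ℝ,
      (((2 * κ * (y - t) ^ 2 : ℝ) : EReal) ≤ h y - h t →
        Hfun κ h t y = -h y + ((κ * (y - t) ^ 2 : ℝ) : EReal)) ∧
      (∀ ht hy : ℝ, h t = (ht : EReal) → h y = (hy : EReal) →
        0 ≤ hy - ht → hy - ht ≤ 2 * κ * (y - t) ^ 2 →
        Hfun κ h t y = ((-ht - (hy - ht) ^ 2 / (4 * κ * (y - t) ^ 2) : ℝ) : EReal)) ∧
      (h y - h t ≤ 0 → Hfun κ h t y = -h t)) :=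
  ⟨lintegral_mono fun t => le_iInf fun y =>
      lintegral_eexp_mul_distcE_snoc_sq_le_eexpE_Hfun hn ν A hκ.le hh t y,
    fun _ _ =>
      ⟨Hfun_eq_of_two_mul_le_sub hκ.le, fun _ _ => Hfun_eq_of_sub_le_two_mul,
        Hfun_eq_of_sub_nonpos hκ.le⟩⟩

theorem induction_step_with_H {n : ℕ} (hn : 1 ≤ n)
    (μ : Fin (n + 1) → Measure ℝ) (hμ : ∀ i, IsProbabilityMeasure (μ i))
    (A : Set (Fin (n + 1) → ℝ)) (hA : A.Nonempty)
    (κ : ℝ) (hκ : 0 < κ) (h : ℝ → EReal)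
    (hh : ∀ x : ℝ, h x ≤
      -elog (∫⁻ v, eexp (ENNReal.ofReal κ *
          distcE v {u : Fin n → ℝ | Fin.snoc u x ∈ A} ^ 2)
        ∂(Measure.pi fun i : Fin n => μ i.castSucc))) :
    (∫⁻ x, eexp (ENNReal.ofReal κ * distcE x A ^ 2) ∂(Measure.pi μ) ≤
      ∫⁻ x, ⨅ y : ℝ, eexpE (Hfun κ h (x (Fin.last n)) y) ∂(Measure.pi μ)) ∧
    (∀ t y : ℝ,
      ((((2 * κ * (y - t) ^ 2 : ℝ)) : EReal) ≤ h y - h t →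
        Hfun κ h t y = -h y + ((κ * (y - t) ^ 2 : ℝ) : EReal)) ∧
      (∀ ht hy : ℝ, h t = (ht : EReal) → h y = (hy : EReal) →
        0 ≤ hy - ht → hy - ht ≤ 2 * κ * (y - t) ^ 2 →
        Hfun κ h t y = ((-ht - (hy - ht) ^ 2 / (4 * κ * (y - t) ^ 2) : ℝ) : EReal)) ∧
      (h y - h t ≤ 0 → Hfun κ h t y = -h t)) := by
  obtain ⟨hmoment, hformulas⟩ := induction_step_with_H_general hn
    (Measure.pi fun i : Fin n => μ i.castSucc) (μ (Fin.last n)) A hκ h hh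
  exact ⟨(lintegral_pi_le_lintegral_lintegral_snoc μ _).trans
    (hmoment.trans (lintegral_le_lintegral_pi_eval μ (Fin.last n) _)), hformulas⟩
end
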